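/- arXiv:0906.0076 — 10 statements merged into one kernel-verified Lean document; each statement's English description precedes it below -/
import Mathlib

section
/- Let n ≥ 2. For every permutation π of {1, …, n−1}, the element σ_{π(1)}^{(−1)^{π(1)+1}} · σ_{π(2)}^{(−1)^{π(2)+1}} ⋯ σ_{π(n−1)}^{(−1)^{π(n−1)+1}} of the braid group B_n is conjugate in B_n to α_n := σ_1 σ_2^{-1} σ_3 σ_4^{-1} ⋯ σ_{n−1}^{(−1)^n}. -/
/-!
Only the far commutation relations are needed, and the signs play no role: if `f 0, …, f (m-1)` are
elements of a group such that `f i` and `f j` commute whenever `|i - j| ≥ 2`, then the products of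
the `f i` taken in any two orders are conjugate. (This is the usual argument for the conjugacy of
Coxeter elements when the graph is a tree, here a path.)

The argument is by induction on the number of generators. A cyclic rotation, which is a conjugation,
brings the last generator `x = f (m+1)` to the front of the word. As `x` commutes with everything
except `f m`, it can be moved to the right until it meets `f m`. The result is a product in some
order of `f 0, …, f (m-1), x * f m` (`mul_prod_map_eq_prod_map_update`), and this shorter sequence
again satisfies the far commutation hypothesis, so the order does not matter by induction.
-/

/-- The braid relations on `n` strands, as elements of the free group on
generators indexed by `Fin (n-1)` (generator `i` corresponds to `σ_{i+1}`). -/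
def braidRels (n : ℕ) : Set (FreeGroup (Fin (n - 1))) :=
  {r | ∃ i j : Fin (n - 1), (i : ℕ) + 2 ≤ (j : ℕ) ∧
      r = FreeGroup.of i * FreeGroup.of j * (FreeGroup.of i)⁻¹ * (FreeGroup.of j)⁻¹} ∪
  {r | ∃ i j : Fin (n - 1), (j : ℕ) = (i : ℕ) + 1 ∧
      r = FreeGroup.of i * FreeGroup.of j * FreeGroup.of i *
        (FreeGroup.of j * FreeGroup.of i * FreeGroup.of j)⁻¹}

/-- The braid group on `n` strands, presented by generators `σ_1, …, σ_{n-1}`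
and the braid relations. -/
def BraidGroup (n : ℕ) : Type := PresentedGroup (braidRels n)

instance (n : ℕ) : Group (BraidGroup n) :=
  inferInstanceAs (Group (PresentedGroup (braidRels n)))

/-- The Artin generator `σ_i` of the braid group `B_n`, for `1 ≤ i ≤ n-1`
(junk value `1` outside this range). -/
def braidGen (n i : ℕ) : BraidGroup n :=
  if h : 1 ≤ i ∧ i ≤ n - 1 then PresentedGroup.of ⟨i - 1, by omega⟩ else 1

/-- The braid `α_n = σ_1 σ_2⁻¹ σ_3 σ_4⁻¹ ⋯ σ_{n-1}^{(-1)^n}`. -/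
def braidAlpha (n : ℕ) : BraidGroup n :=
  ((List.range (n - 1)).map fun k => braidGen n (k + 1) ^ ((-1 : ℤ) ^ k)).prod

/-- The band generator `(t s)` (for `1 ≤ s < t ≤ n`):
`σ_{t-1} σ_{t-2} ⋯ σ_s ⋅ σ_{s+1}⁻¹ σ_{s+2}⁻¹ ⋯ σ_{t-1}⁻¹`. -/
def bandGen (n t s : ℕ) : BraidGroup n :=
  (((List.range (t - s)).map fun k => braidGen n (t - 1 - k)).prod) *
  (((List.range (t - 1 - s)).map fun k => (braidGen n (s + 1 + k))⁻¹).prod)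

/-- The descending cycle `(n_1 n_2 … n_m) = (n_1 n_2)(n_2 n_3) ⋯ (n_{m-1} n_m)`
associated to a (strictly decreasing) list `[n_1, n_2, …, n_m]`. -/
def descCycle (n : ℕ) (L : List ℕ) : BraidGroup n :=
  ((L.zip L.tail).map fun p => bandGen n p.1 p.2).prod

/-- The fundamental word `δ = σ_{n-1} σ_{n-2} ⋯ σ_1`. -/
def braidDelta (n : ℕ) : BraidGroup n :=
  ((List.range (n - 1)).map fun k => braidGen n (n - 1 - k)).prod

/-- For a permutation `π` of `{1, …, n-1}` (coded as `Equiv.Perm (Fin (n-1))`,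
position/value `k` corresponding to `k+1`), the braid
`σ_{π(1)}^{(-1)^{π(1)+1}} σ_{π(2)}^{(-1)^{π(2)+1}} ⋯ σ_{π(n-1)}^{(-1)^{π(n-1)+1}}`. -/
def permutedAlpha (n : ℕ) (π : Equiv.Perm (Fin (n - 1))) : BraidGroup n :=
  (List.ofFn fun k : Fin (n - 1) =>
    braidGen n ((π k : ℕ) + 1) ^ ((-1 : ℤ) ^ (π k : ℕ))).prod

/-- An element `x` commuting with all factors of a product except `f k` can be absorbed into the
factor `f k`. -/
theorem mul_prod_map_eq_prod_map_update {G : Type*} [Group G] (f : ℕ → G) (x : G) (k : ℕ) :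
    ∀ L : List ℕ, L.Nodup → k ∈ L → (∀ i ∈ L, i ≠ k → Commute x (f i)) →
      x * (L.map f).prod = (L.map (Function.update f k (x * f k))).prod := by
  intro L
  induction L with
  | nil => simp
  | cons a L ih =>
    intro hnd hk hc
    rw [List.nodup_cons] at hnd
    by_cases hak : a = k
    · subst hak
      have : L.map (Function.update f a (x * f a)) = L.map f := by
        apply List.map_congr_left
        intro i hi
        have : i ≠ a := fun h => hnd.1 (h ▸ hi)
        simp [this]
      simp [this, mul_assoc]
    · have hk' : k ∈ L := by
        rcases List.mem_cons.1 hk with h | h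
        · exact absurd h.symm hak
        · exact h
      have h1 := ih hnd.2 hk' fun i hi => hc i (List.mem_cons_of_mem _ hi)
      have h2 : x * f a = f a * x := hc a List.mem_cons_self hak
      simp only [List.map_cons, List.prod_cons, Function.update_of_ne hak]
      rw [← h1, ← mul_assoc, h2, mul_assoc]

/-- Any word in which each of `0, …, m+1` occurs once gives, up to conjugation, a product in some
order of `f 0, …, f (m-1), f (m+1) * f m`. -/
theorem exists_perm_isConj_prod_update {G : Type*} [Group G] (m : ℕ) (f : ℕ → G)
    (hf : ∀ i j, i + 2 ≤ j → j < m + 2 → Commute (f i) (f j))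
    (L : List ℕ) (hL : L.Perm (List.range (m + 2))) :
    ∃ L' : List ℕ, L'.Perm (List.range (m + 1)) ∧
      IsConj (L.map f).prod
        (L'.map (Function.update f m (f (m + 1) * f m))).prod := by
  have hmem : m + 1 ∈ L := hL.mem_iff.2 (by simp)
  obtain ⟨A, B, rfl⟩ := List.append_of_mem hmem
  have hp : (B ++ A).Perm (List.range (m + 1)) := by
    have h1 : ((m + 1) :: (B ++ A)).Perm (A ++ (m + 1) :: B) :=
      ((List.perm_append_comm (l₁ := B) (l₂ := A)).cons _).trans List.perm_middle.symm
    have h2 : (List.range (m + 2)).Perm ((m + 1) :: List.range (m + 1)) := by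
      rw [List.range_succ]
      exact List.perm_append_comm (l₂ := [m + 1])
    exact ((h1.trans hL).trans h2).cons_inv
  refine ⟨B ++ A, hp, ?_⟩
  rw [← mul_prod_map_eq_prod_map_update f (f (m + 1)) m (B ++ A)
    (hp.nodup_iff.2 List.nodup_range) (hp.mem_iff.2 (by simp))]
  · rw [isConj_iff]
    refine ⟨(A.map f).prod⁻¹, ?_⟩
    simp [mul_assoc]
  · intro i hi hne
    have : i < m + 1 := by simpa using hp.mem_iff.1 hi
    exact (hf i (m + 1) (by omega) (by omega)).symm

theorem isConj_prod_map_of_perm_range {G : Type*} [Group G] (m : ℕ) :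
    ∀ f : ℕ → G, (∀ i j, i + 2 ≤ j → j < m → Commute (f i) (f j)) →
      ∀ L₁ L₂ : List ℕ, L₁.Perm (List.range m) → L₂.Perm (List.range m) →
        IsConj (L₁.map f).prod (L₂.map f).prod := by
  induction m with
  | zero =>
    intro f _ L₁ L₂ h₁ h₂
    rw [List.range_zero, List.perm_nil] at h₁ h₂
    rw [h₁, h₂]
  | succ m ih =>
    cases m with
    | zero =>
      intro f _ L₁ L₂ h₁ h₂
      rw [List.range_one, List.perm_singleton] at h₁ h₂
      rw [h₁, h₂]
    | succ m =>
      intro f hf L₁ L₂ h₁ h₂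
      obtain ⟨L₁', hp₁, hc₁⟩ := exists_perm_isConj_prod_update m f hf L₁ h₁
      obtain ⟨L₂', hp₂, hc₂⟩ := exists_perm_isConj_prod_update m f hf L₂ h₂
      refine hc₁.trans ((ih _ ?_ L₁' L₂' hp₁ hp₂).trans hc₂.symm)
      intro i j hij hj
      rw [Function.update_of_ne (show i ≠ m by omega)]
      by_cases hjm : j = m
      · subst hjm
        rw [Function.update_self]
        exact (hf i (j + 1) (by omega) (by omega)).mul_right (hf i j hij (by omega))
      · rw [Function.update_of_ne hjm]
        exact hf i j hij (by omega)

theorem commute_braidGen (n i j : ℕ) (hij : i + 2 ≤ j) :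
    Commute (braidGen n i) (braidGen n j) := by
  by_cases hi : 1 ≤ i ∧ i ≤ n - 1
  · by_cases hj : 1 ≤ j ∧ j ≤ n - 1
    · have hr : FreeGroup.of (⟨i - 1, by omega⟩ : Fin (n - 1)) * FreeGroup.of ⟨j - 1, by omega⟩ *
          (FreeGroup.of ⟨i - 1, by omega⟩)⁻¹ * (FreeGroup.of ⟨j - 1, by omega⟩)⁻¹ ∈
          braidRels n :=
        Or.inl ⟨_, _, by simp only; omega, rfl⟩
      have h := PresentedGroup.one_of_mem hr
      simp only [map_mul, map_inv] at h
      have h1 : braidGen n i = (PresentedGroup.of ⟨i - 1, by omega⟩ :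
          PresentedGroup (braidRels n)) := dif_pos hi
      have h2 : braidGen n j = (PresentedGroup.of ⟨j - 1, by omega⟩ :
          PresentedGroup (braidRels n)) := dif_pos hj
      rw [h1, h2]
      exact commutatorElement_eq_one_iff_commute.1 h
    · have h : braidGen n j = 1 := dif_neg hj
      rw [h]
      exact Commute.one_right _
  · have h : braidGen n i = 1 := dif_neg hi
    rw [h]
    exact Commute.one_left _

/-- every permutation of the letters of the word
`σ_1 σ_2⁻¹ σ_3 σ_4⁻¹ ⋯ σ_{n-1}^{(-1)^n}` yields a braid conjugate to `α_n`. -/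
theorem stmt_0 (n : ℕ) (hn : 2 ≤ n) (π : Equiv.Perm (Fin (n - 1))) :
    IsConj (braidAlpha n) (permutedAlpha n π) := by
  have hL : permutedAlpha n π = ((List.ofFn fun k : Fin (n - 1) => (π k : ℕ)).map
      fun k => braidGen n (k + 1) ^ ((-1 : ℤ) ^ k)).prod := by
    rw [List.map_ofFn]
    rfl
  rw [hL]
  refine isConj_prod_map_of_perm_range (n - 1) _ ?_ _ _ (List.Perm.refl _) ?_
  · intro i j hij _
    exact (commute_braidGen n (i + 1) (j + 1) (by omega)).zpow_zpow _ _
  · refine (List.perm_ext_iff_of_nodup ?_ List.nodup_range).2 fun a => ?_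
    · exact List.nodup_ofFn.2 (Fin.val_injective.comp π.injective)
    · rw [List.mem_ofFn, List.mem_range]
      constructor
      · rintro ⟨k, rfl⟩
        exact (π k).isLt
      · intro ha
        exact ⟨π.symm ⟨a, ha⟩, by simp⟩
end

section
/- Let n ≥ 2 and let p : B_n → S_n be the group homomorphism from the braid group to the symmetric group on {1, …, n} sending each generator σ_i to the transposition (i, i+1). Then the set { p( σ_{π(1)}^{(−1)^{π(1)+1}} ⋯ σ_{π(n−1)}^{(−1)^{π(n−1)+1}} ) : π a permutation of {1, …, n−1} } of permutations has exactly 2^{n−2} elements; in particular two such products are equal in B_n only if their underlying permutations of strands are equal. -/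
/-!
Under `p` the exponents `±1` disappear, since transpositions are involutions. The claim thus
counts the products of the adjacent transpositions `s₀, …, s_k` (`k = n - 2`), each used once, in
any order.

The count goes by recursion on `k`. The new generator `s_{k+1}` commutes with every
generator except `s_k`, so in a word it may be moved to the right end when `s_k` stands on its
left, and to the left end otherwise. Hence the set `C_{k+1}` of products is
`C_k s_{k+1} ∪ s_{k+1} C_k` (`mem_coxeterElts_iff`). Both parts have as many elements as `C_k`.
They are disjoint: `c s_{k+1} = s_{k+1} c'`, evaluated at `k + 2`, gives `c (k + 1) = k + 1`,
whereas every element of `C_k` moves `k + 1` (`coxeterElts_apply_ne`). So the cardinality doubles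
at every step (`card_coxeterElts`), starting from `C_0 = {s₀}`.

All of this is done in `Equiv.Perm ℕ`, into which `Equiv.Perm (Fin n)` embeds, so that the
groups for different `k` need not be identified with subgroups of one another.
-/

/-- The adjacent transposition `(i, i+1)` of the natural numbers. -/
def adjSwap (i : ℕ) : Equiv.Perm ℕ := Equiv.swap i (i + 1)

lemma adjSwap_apply_of_lt {i j : ℕ} (h : i + 1 < j) : adjSwap i j = j :=
  Equiv.swap_apply_of_ne_of_ne (by omega) (by omega)

lemma adjSwap_commute {i j : ℕ} (h : i + 2 ≤ j) : Commute (adjSwap i) (adjSwap j) := by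
  apply Equiv.Perm.Disjoint.commute
  intro x
  by_cases hx : x ≤ i + 1
  · right
    exact Equiv.swap_apply_of_ne_of_ne (by omega) (by omega)
  · left
    exact Equiv.swap_apply_of_ne_of_ne (by omega) (by omega)

open Classical in
/-- The products of `s₀, …, s_k` in all orders, described recursively: `s_{k+1}` is put
at the right end or at the left end. -/
noncomputable def coxeterElts : ℕ → Finset (Equiv.Perm ℕ)
  | 0 => {adjSwap 0}
  | k + 1 => (coxeterElts k).image (· * adjSwap (k + 1)) ∪
      (coxeterElts k).image (adjSwap (k + 1) * ·)

lemma mem_coxeterElts_succ {k : ℕ} {g : Equiv.Perm ℕ} : g ∈ coxeterElts (k + 1) ↔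
    (∃ c ∈ coxeterElts k, c * adjSwap (k + 1) = g) ∨
      ∃ c ∈ coxeterElts k, adjSwap (k + 1) * c = g := by
  simp only [coxeterElts, Finset.mem_union, Finset.mem_image]

lemma coxeterElts_apply_of_lt {k : ℕ} : ∀ {c : Equiv.Perm ℕ}, c ∈ coxeterElts k →
    ∀ {j : ℕ}, k + 1 < j → c j = j := by
  induction k with
  | zero =>
    intro c hc j hj
    rw [Finset.mem_singleton.1 hc]
    exact adjSwap_apply_of_lt hj
  | succ k ih =>
    intro c hc j hj
    rcases mem_coxeterElts_succ.1 hc with ⟨c, hc', rfl⟩ | ⟨c, hc', rfl⟩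
    · rw [Equiv.Perm.mul_apply, adjSwap_apply_of_lt hj, ih hc' (by omega)]
    · rw [Equiv.Perm.mul_apply, ih hc' (by omega), adjSwap_apply_of_lt hj]

lemma coxeterElts_apply_ne {k : ℕ} {c : Equiv.Perm ℕ} (hc : c ∈ coxeterElts k) :
    c (k + 1) ≠ k + 1 := by
  cases k with
  | zero =>
    rw [Finset.mem_singleton.1 hc]
    simp [adjSwap]
  | succ k =>
    rcases mem_coxeterElts_succ.1 hc with ⟨c, hc', rfl⟩ | ⟨c, hc', rfl⟩
    · rw [Equiv.Perm.mul_apply, adjSwap, Equiv.swap_apply_right]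
      intro h
      have h2 := coxeterElts_apply_of_lt hc' (show k + 1 < k + 1 + 1 by omega)
      have := c.injective (h.trans h2.symm)
      omega
    · rw [Equiv.Perm.mul_apply, coxeterElts_apply_of_lt hc' (by omega), adjSwap,
        Equiv.swap_apply_right]
      omega

open Classical in
lemma card_coxeterElts (k : ℕ) : (coxeterElts k).card = 2 ^ k := by
  induction k with
  | zero => simp [coxeterElts]
  | succ k ih =>
    rw [coxeterElts, Finset.card_union_of_disjoint,
      Finset.card_image_of_injective _ (mul_left_injective _),
      Finset.card_image_of_injective _ (mul_right_injective _), ih, pow_succ]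
    · ring
    · rw [Finset.disjoint_left]
      intro g h1 h2
      obtain ⟨c, hc, rfl⟩ := Finset.mem_image.1 h1
      obtain ⟨c', hc', h⟩ := Finset.mem_image.1 h2
      have h3 := congrArg (fun f : Equiv.Perm ℕ => f (k + 1 + 1)) h
      simp only [Equiv.Perm.mul_apply] at h3
      rw [coxeterElts_apply_of_lt hc' (by omega), adjSwap, Equiv.swap_apply_right] at h3
      exact coxeterElts_apply_ne hc h3.symm

lemma commute_prod_adjSwap {k : ℕ} {l : List ℕ} (h : ∀ i ∈ l, i < k) :
    Commute (adjSwap (k + 1)) (l.map adjSwap).prod := by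
  apply Commute.list_prod_right
  intro x hx
  obtain ⟨i, hi, rfl⟩ := List.mem_map.1 hx
  exact (adjSwap_commute (by have := h i hi; omega)).symm

/-- The recursive description gives exactly the products of `s₀, …, s_k` in some order. -/
lemma mem_coxeterElts_iff (k : ℕ) : ∀ g : Equiv.Perm ℕ, g ∈ coxeterElts k ↔
    ∃ l : List ℕ, l.Perm (List.range (k + 1)) ∧ (l.map adjSwap).prod = g := by
  induction k with
  | zero =>
    intro g
    simp [coxeterElts, eq_comm]
  | succ k ih =>
    intro g
    rw [mem_coxeterElts_succ]
    constructor
    · rintro (⟨c, hc, rfl⟩ | ⟨c, hc, rfl⟩)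
      · obtain ⟨l, hl, rfl⟩ := (ih c).1 hc
        refine ⟨l ++ [k + 1], ?_, by simp⟩
        rw [List.range_succ (n := k + 1)]
        exact hl.append_right _
      · obtain ⟨l, hl, rfl⟩ := (ih c).1 hc
        refine ⟨(k + 1) :: l, ?_, by simp⟩
        rw [List.range_succ (n := k + 1)]
        exact (hl.cons _).trans (List.perm_append_singleton _ _).symm
    · rintro ⟨l, hl, rfl⟩
      have hmem : k + 1 ∈ l := hl.mem_iff.2 (by simp)
      obtain ⟨a, b, rfl⟩ := List.append_of_mem hmem
      have hab : (a ++ b).Perm (List.range (k + 1)) := by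
        rw [List.range_succ (n := k + 1)] at hl
        exact (List.perm_middle.symm.trans
          (hl.trans (List.perm_append_singleton _ _))).cons_inv
      have hnd : (a ++ b).Nodup := hab.nodup_iff.2 List.nodup_range
      have hlt : ∀ i ∈ a ++ b, i < k + 1 := fun i hi => List.mem_range.1 (hab.mem_iff.1 hi)
      have hc := (ih _).2 ⟨a ++ b, hab, rfl⟩
      by_cases hk : k ∈ a
      · left
        have hb : ∀ i ∈ b, i < k := by
          intro i hi
          have h1 := hlt i (List.mem_append_right _ hi)
          have h2 : i ≠ k := by
            rintro rfl
            exact List.disjoint_of_nodup_append hnd hk hi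
          omega
        refine ⟨_, hc, ?_⟩
        simp only [List.map_append, List.prod_append, List.map_cons, List.prod_cons]
        rw [(commute_prod_adjSwap hb).eq, mul_assoc]
      · right
        have ha : ∀ i ∈ a, i < k := by
          intro i hi
          have h1 := hlt i (List.mem_append_left _ hi)
          have h2 : i ≠ k := by
            rintro rfl
            exact hk hi
          omega
        refine ⟨_, hc, ?_⟩
        simp only [List.map_append, List.prod_append, List.map_cons, List.prod_cons]
        rw [← mul_assoc, (commute_prod_adjSwap ha).eq, mul_assoc]

/-- Permutations of `Fin m`, written as lists of values, are the rearrangements of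
`0, …, m - 1`. -/
lemma exists_perm_ofFn_iff (m : ℕ) (l : List ℕ) :
    (∃ π : Equiv.Perm (Fin m), List.ofFn (fun k => (π k : ℕ)) = l) ↔
      l.Perm (List.range m) := by
  constructor
  · rintro ⟨π, rfl⟩
    have hnd : (List.ofFn fun k => (π k : ℕ)).Nodup :=
      List.nodup_ofFn.2 (Fin.val_injective.comp π.injective)
    rw [List.perm_ext_iff_of_nodup hnd List.nodup_range]
    intro i
    rw [List.mem_ofFn, List.mem_range]
    constructor
    · rintro ⟨k, rfl⟩
      exact (π k).isLt
    · intro hi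
      exact ⟨π.symm ⟨i, hi⟩, by simp⟩
  · intro hl
    have hlen : l.length = m := by simpa using hl.length_eq
    subst hlen
    have hnd : l.Nodup := hl.nodup_iff.2 List.nodup_range
    let f : Fin l.length → Fin l.length := fun k =>
      ⟨l.get k, List.mem_range.1 (hl.mem_iff.1 (l.get_mem k))⟩
    have hf : Function.Injective f := fun a b h =>
      List.nodup_iff_injective_get.1 hnd (congrArg Fin.val h)
    refine ⟨Equiv.ofBijective f (Finite.injective_iff_bijective.1 hf), ?_⟩
    exact List.ofFn_get l

lemma viaEmbedding_swap (n i : ℕ) (h1 : i < n) (h2 : i + 1 < n) :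
    Equiv.Perm.viaEmbeddingHom Fin.valEmbedding
      (Equiv.swap (⟨i, h1⟩ : Fin n) ⟨i + 1, h2⟩) = adjSwap i := by
  ext x
  rw [Equiv.Perm.viaEmbeddingHom_apply]
  by_cases hx : x < n
  · have := Equiv.Perm.viaEmbedding_apply
      (Equiv.swap (⟨i, h1⟩ : Fin n) ⟨i + 1, h2⟩) Fin.valEmbedding ⟨x, hx⟩
    simp only [Fin.valEmbedding_apply] at this
    rw [this, adjSwap]
    simp only [Equiv.swap_apply_def, Fin.mk.injEq]
    split_ifs <;> rfl
  · rw [Equiv.Perm.viaEmbedding_apply_of_notMem]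
    · rw [adjSwap, Equiv.swap_apply_of_ne_of_ne] <;> omega
    · rintro ⟨y, rfl⟩
      exact hx y.isLt


/-- for the canonical projection `p : B_n → S_n` (sending `σ_i` to the
transposition `(i, i+1)`), the set of images of the permuted words of `α_n` has
exactly `2^(n-2)` elements; in particular two such products are equal in `B_n`
only if their underlying permutations of strands are equal. -/
theorem stmt_2 (n : ℕ) (hn : 2 ≤ n) (p : BraidGroup n →* Equiv.Perm (Fin n))
    (hp : ∀ i : ℕ, ∀ _h1 : 1 ≤ i, ∀ _h2 : i ≤ n - 1,
      p (braidGen n i) = Equiv.swap ⟨i - 1, by omega⟩ ⟨i, by omega⟩) :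
    (Set.range fun π : Equiv.Perm (Fin (n - 1)) => p (permutedAlpha n π)).ncard = 2 ^ (n - 2)
      ∧ ∀ π₁ π₂ : Equiv.Perm (Fin (n - 1)), permutedAlpha n π₁ = permutedAlpha n π₂ →
          p (permutedAlpha n π₁) = p (permutedAlpha n π₂) := by
  refine ⟨?_, fun π₁ π₂ h => congrArg p h⟩
  obtain ⟨k, rfl⟩ : ∃ k, n = k + 2 := ⟨n - 2, by omega⟩
  let φ : Equiv.Perm (Fin (k + 2)) →* Equiv.Perm ℕ :=
    Equiv.Perm.viaEmbeddingHom Fin.valEmbedding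
  have hφ : Function.Injective φ := Equiv.Perm.viaEmbeddingHom_injective _
  have hgen : ∀ i : ℕ, i < k + 1 →
      φ (p (braidGen (k + 2) (i + 1) ^ ((-1 : ℤ) ^ i))) = adjSwap i := by
    intro i hi
    have h := hp (i + 1) (by omega) (by omega)
    have h2 : φ (p (braidGen (k + 2) (i + 1))) = adjSwap i := by
      rw [h]
      exact viaEmbedding_swap (k + 2) i (by omega) (by omega)
    rw [map_zpow, map_zpow, h2]
    rcases neg_one_pow_eq_or ℤ i with h | h <;> rw [h]
    · exact zpow_one _
    · rw [zpow_neg_one]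
      exact Equiv.swap_inv _ _
  have hprod : ∀ π : Equiv.Perm (Fin (k + 1)), φ (p (permutedAlpha (k + 2) π)) =
      ((List.ofFn fun j => (π j : ℕ)).map adjSwap).prod := by
    intro π
    rw [permutedAlpha, map_list_prod, map_list_prod, List.map_map, List.map_ofFn, List.map_ofFn]
    congr 2
    funext j
    exact hgen _ (π j).isLt
  rw [← Set.ncard_image_of_injective _ hφ]
  have hset : φ '' (Set.range fun π : Equiv.Perm (Fin (k + 1)) => p (permutedAlpha (k + 2) π)) =
      (coxeterElts k : Set (Equiv.Perm ℕ)) := by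
    ext g
    rw [Finset.mem_coe, mem_coxeterElts_iff, ← Set.range_comp]
    constructor
    · rintro ⟨π, rfl⟩
      exact ⟨_, (exists_perm_ofFn_iff _ _).1 ⟨π, rfl⟩, (hprod π).symm⟩
    · rintro ⟨l, hl, rfl⟩
      obtain ⟨π, rfl⟩ := (exists_perm_ofFn_iff _ _).2 hl
      exact ⟨π, hprod π⟩
  exact (congrArg Set.ncard hset).trans ((Set.ncard_coe_finset _).trans (card_coxeterElts k))
end

section
/- Let N ≥ 2 be an even natural number. The number of finite sequences (a_1, b_1, a_2, b_2, …, a_r, b_r) of natural numbers, over all lengths r ≥ 1, such that a_1 + b_1 + ⋯ + a_r + b_r = N, every a_i is even, b_i is odd for every i < r, and b_r ≥ 1, is at least 2^{N/2}. -/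
/-- The admissible sequences `(a_1, b_1, …, a_r, b_r)` of total `N`, as lists of pairs. -/
def admissible (N : ℕ) : Set (List (ℕ × ℕ)) :=
  {l : List (ℕ × ℕ) | l ≠ [] ∧
        (l.map fun p => p.1 + p.2).sum = N ∧
        (∀ p ∈ l, Even p.1) ∧
        (∀ i : ℕ, ∀ h : i + 1 < l.length, Odd (l.get ⟨i, by omega⟩).2) ∧
        1 ≤ (l.getLast?.getD (0, 0)).2}

/-- Adds `2` to the entry `a_1`. -/
def bumpHead : List (ℕ × ℕ) → List (ℕ × ℕ)
  | [] => []
  | p :: t => (p.1 + 2, p.2) :: t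

lemma bumpHead_injective : Function.Injective bumpHead := by
  rintro (_ | ⟨⟨a, b⟩, t⟩) (_ | ⟨⟨c, d⟩, u⟩) h <;> simp_all [bumpHead]

lemma cons_mem_admissible {N : ℕ} {l : List (ℕ × ℕ)} (hl : l ∈ admissible N) :
    (0, 1) :: l ∈ admissible (N + 1) := by
  obtain ⟨h0, h1, h2, h3, h4⟩ := hl
  refine ⟨by simp, ?_, ?_, ?_, ?_⟩
  · simp [h1, add_comm]
  · simpa using h2
  · rintro (_ | i) h
    · simp
    · simpa using h3 i (by simpa using h)
  · cases l with
    | nil => exact absurd rfl h0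
    | cons p t => simpa [List.getLast?_cons_cons] using h4

lemma bumpHead_mem_admissible {N : ℕ} {l : List (ℕ × ℕ)} (hl : l ∈ admissible N) :
    bumpHead l ∈ admissible (N + 2) := by
  obtain ⟨h0, h1, h2, h3, h4⟩ := hl
  cases l with
  | nil => exact absurd rfl h0
  | cons p t =>
    refine ⟨by simp [bumpHead], ?_, ?_, ?_, ?_⟩
    · simp only [bumpHead, List.map_cons, List.sum_cons] at h1 ⊢
      omega
    · simp only [bumpHead, List.mem_cons, forall_eq_or_imp] at h2 ⊢
      exact ⟨h2.1.add even_two, h2.2⟩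
    · rintro (_ | i) h
      · simpa [bumpHead] using h3 0 (by simpa [bumpHead] using h)
      · simpa [bumpHead] using h3 (i + 1) (by simpa [bumpHead] using h)
    · cases t with
      | nil => simpa [bumpHead] using h4
      | cons q u => simpa [bumpHead, List.getLast?_cons_cons] using h4

lemma one_le_snd {N : ℕ} {l : List (ℕ × ℕ)} (hl : l ∈ admissible N) :
    ∀ p ∈ l, 1 ≤ p.2 := by
  obtain ⟨h0, -, -, h3, h4⟩ := hl
  intro p hp
  obtain ⟨i, hi, rfl⟩ := List.mem_iff_getElem.1 hp
  by_cases h : i + 1 < l.length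
  · exact (h3 i h).pos
  · have : i = l.length - 1 := by omega
    subst this
    rw [List.getLast?_eq_some_getLast h0] at h4
    simpa [List.getLast_eq_getElem] using h4

lemma admissible_finite (N : ℕ) : (admissible N).Finite := by
  refine ((List.finite_length_le (Fin (N + 1) × Fin (N + 1)) N).image
    (List.map fun p => ((p.1 : ℕ), (p.2 : ℕ)))).subset ?_
  intro l hl
  have hpos := one_le_snd hl
  obtain ⟨-, h1, -⟩ := hl
  have hle : ∀ p ∈ l, p.1 + p.2 ≤ N := fun p hp =>
    h1 ▸ List.single_le_sum (by simp) _ (List.mem_map_of_mem hp)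
  refine ⟨l.map fun p => (Fin.ofNat (N + 1) p.1, Fin.ofNat (N + 1) p.2), ?_, ?_⟩
  · have := List.length_le_sum_of_one_le (l.map fun p => p.1 + p.2) (by
      simp only [List.mem_map]
      rintro _ ⟨p, hp, rfl⟩
      have := hpos p hp
      omega)
    simpa [h1] using this
  · rw [List.map_map]
    conv_rhs => rw [← List.map_id l]
    refine List.map_congr_left fun p hp => ?_
    have := hle p hp
    ext
    · simp [Nat.mod_eq_of_lt (show p.1 < N + 1 by omega)]
    · simp [Nat.mod_eq_of_lt (show p.2 < N + 1 by omega)]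

lemma two_mul_ncard_admissible_le (N : ℕ) :
    2 * (admissible N).ncard ≤ (admissible (N + 2)).ncard := by
  have hfin := admissible_finite N
  let f : List (ℕ × ℕ) → List (ℕ × ℕ) := fun l => (0, 1) :: (0, 1) :: l
  have hf : Function.Injective f := fun l m h => by simpa [f] using h
  have hdisj : Disjoint (f '' admissible N) (bumpHead '' admissible N) := by
    rw [Set.disjoint_left]
    rintro _ ⟨l, -, rfl⟩ ⟨m, -, hm⟩
    cases m <;> simp [f, bumpHead] at hm
  calc 2 * (admissible N).ncard
      = (f '' admissible N ∪ bumpHead '' admissible N).ncard := by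
        rw [Set.ncard_union_eq hdisj (hfin.image _) (hfin.image _),
          Set.ncard_image_of_injective _ hf, Set.ncard_image_of_injective _ bumpHead_injective,
          two_mul]
    _ ≤ _ := by
        refine Set.ncard_le_ncard ?_ (admissible_finite _)
        rintro _ (⟨l, hl, rfl⟩ | ⟨l, hl, rfl⟩)
        · exact cons_mem_admissible (cons_mem_admissible hl)
        · exact bumpHead_mem_admissible hl

lemma singleton_mem_admissible {b : ℕ} (hb : 1 ≤ b) : [(0, b)] ∈ admissible b :=
  ⟨by simp, by simp, by simp, by simp, by simpa using hb⟩

lemma two_pow_le_ncard_admissible (k : ℕ) :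
    2 ^ (k + 1) ≤ (admissible (2 * (k + 1))).ncard := by
  induction k with
  | zero =>
    have hsub : {[(0, 2)], [(0, 1), (0, 1)]} ⊆ admissible 2 := by
      rintro _ (rfl | rfl)
      · exact singleton_mem_admissible (by norm_num)
      · exact cons_mem_admissible (singleton_mem_admissible le_rfl)
    have := Set.ncard_le_ncard hsub (admissible_finite 2)
    rwa [Set.ncard_pair (by simp)] at this
  | succ k ih =>
    rw [pow_succ']
    exact (Nat.mul_le_mul_left 2 ih).trans (two_mul_ncard_admissible_le _)

/-- for even `N ≥ 2`, the number of sequences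
`(a_1, b_1, …, a_r, b_r)` (coded as nonempty lists of pairs) with
`a_1 + b_1 + ⋯ + a_r + b_r = N`, all `a_i` even, `b_i` odd for `i < r`, and
`b_r ≥ 1`, is at least `2^(N/2)`. -/
theorem stmt_3 (N : ℕ) (hN : 2 ≤ N) (hNeven : Even N) :
    2 ^ (N / 2) ≤
      {l : List (ℕ × ℕ) | l ≠ [] ∧
        (l.map fun p => p.1 + p.2).sum = N ∧
        (∀ p ∈ l, Even p.1) ∧
        (∀ i : ℕ, ∀ h : i + 1 < l.length, Odd (l.get ⟨i, by omega⟩).2) ∧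
        1 ≤ (l.getLast?.getD (0, 0)).2}.ncard := by
  obtain ⟨m, rfl⟩ := hNeven.exists_two_nsmul
  obtain ⟨k, rfl⟩ : ∃ k, m = k + 1 := ⟨m - 1, by simp at hN; omega⟩
  have h := two_pow_le_ncard_admissible k
  have hk : 2 • (k + 1) / 2 = k + 1 := by simp
  rw [hk]
  exact h
end

section
/- Let n ≥ 3 be odd. In the braid group B_n, the element β := δ^{-1} · ( (n−1 1)(n−2 2)(n−3 3) ⋯ ((n+1)/2 (n−1)/2) )^2 is conjugate to α_n := σ_1 σ_2^{-1} σ_3 σ_4^{-1} ⋯ σ_{n−1}^{-1}. -/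
namespace BraidZigzag

variable {G : Type*} [Group G]

/-! ### Braid relations and supports -/

/-- The braid relations for `s a, s (a+1), …, s (a+m-1)`; these play the role of Artin
generators on the `m + 1` points `a, …, a + m`. -/
structure Braided (s : ℕ → G) (a m : ℕ) : Prop where
  comm : ∀ i j, a ≤ i → i + 2 ≤ j → j < a + m → s i * s j = s j * s i
  braid : ∀ i, a ≤ i → i + 1 < a + m → s i * s (i + 1) * s i = s (i + 1) * s i * s (i + 1)

lemma Braided.mono {s : ℕ → G} {a m b k : ℕ} (h : Braided s a m) (hab : a ≤ b)
    (hk : b + k ≤ a + m) : Braided s b k :=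
  ⟨fun i j h1 h2 h3 => h.comm i j (by omega) h2 (by omega),
   fun i h1 h2 => h.braid i (by omega) (by omega)⟩

/-- The element `g` commutes with everything that centralizes `s a, …, s (a+m-1)`; this stands
in for membership of `g` in the subgroup they generate. -/
def Supported (s : ℕ → G) (a m : ℕ) (g : G) : Prop :=
  ∀ h, (∀ i, a ≤ i → i < a + m → Commute h (s i)) → Commute h g

section Support

variable {s : ℕ → G} {a m b k : ℕ} {g g' : G}

lemma Supported.one : Supported s a m (1 : G) := fun h _ => Commute.one_right h

lemma Supported.gen {i : ℕ} (h1 : a ≤ i) (h2 : i < a + m) : Supported s a m (s i) :=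
  fun _ hh => hh i h1 h2

lemma Supported.mul (h : Supported s a m g) (h' : Supported s a m g') :
    Supported s a m (g * g') := fun x hx => (h x hx).mul_right (h' x hx)

lemma Supported.inv (h : Supported s a m g) : Supported s a m g⁻¹ :=
  fun x hx => (h x hx).inv_right

lemma Supported.mono (h : Supported s b k g) (hab : a ≤ b) (hk : b + k ≤ a + m) :
    Supported s a m g := fun x hx => h x fun i h1 h2 => hx i (by omega) (by omega)

end Support

/-! ### Descending products and band generators -/

/-- The descending product `s (a+m-1) * ⋯ * s a`: the element `δ` on the points
`a, …, a + m`. -/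
def dn (s : ℕ → G) (a : ℕ) : ℕ → G
  | 0 => 1
  | m + 1 => s (a + m) * dn s a m

lemma dn_supported (s : ℕ → G) (a : ℕ) : ∀ m, Supported s a m (dn s a m)
  | 0 => Supported.one
  | m + 1 => (Supported.gen (by omega) (by omega)).mul
      ((dn_supported s a m).mono le_rfl (by omega))

/-- Conjugation by `δ` rotates the generators. -/
lemma dn_shift {s : ℕ → G} {a i : ℕ} : ∀ {m : ℕ}, Braided s a m → a ≤ i → i + 1 < a + m →
    dn s a m * s (i + 1) = s i * dn s a m
  | 0, _, h1, h2 => by omega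
  | m + 1, h, h1, h2 => by
    rcases Nat.lt_or_ge (i + 1) (a + m) with hi | hi
    · have ih := dn_shift (h.mono le_rfl (by omega) : Braided s a m) h1 hi
      simp only [dn]
      rw [mul_assoc, ih, ← mul_assoc, ← mul_assoc, h.comm i (a + m) h1 (by omega) (by omega)]
    · obtain ⟨k, rfl⟩ : ∃ k, m = k + 1 := ⟨m - 1, by omega⟩
      obtain rfl : i = a + k := by omega
      have hc : s (a + k + 1) * dn s a k = dn s a k * s (a + k + 1) :=
        dn_supported s a k _ fun j hj1 hj2 =>
          (h.comm j (a + k + 1) hj1 (by omega) (by omega)).symm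
      have hb := h.braid (a + k) (by omega) (by omega)
      simp only [dn, ← add_assoc]
      calc s (a + k + 1) * (s (a + k) * dn s a k) * s (a + k + 1)
          = s (a + k + 1) * s (a + k) * (dn s a k * s (a + k + 1)) := by group
        _ = (s (a + k + 1) * s (a + k) * s (a + k + 1)) * dn s a k := by rw [← hc]; group
        _ = _ := by rw [← hb]; group

/-- A partial form of the rotation `dn_shift`, for the product of the `k` lowest generators. -/
lemma dn_mul_dn {s : ℕ → G} {a m : ℕ} (h : Braided s a (m + 1)) :
    ∀ k, k ≤ m → dn s a (m + 1) * dn s (a + 1) k = dn s a k * dn s a (m + 1)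
  | 0, _ => by simp [dn]
  | k + 1, hk => by
    have ih := dn_mul_dn h k (by omega)
    have hs := dn_shift (i := a + k) h (by omega) (by omega)
    rw [dn.eq_def s (a + 1) (k + 1), dn.eq_def s a (k + 1)]
    simp only
    rw [show a + 1 + k = a + k + 1 by omega, ← mul_assoc, hs, mul_assoc, ih, mul_assoc]

/-- The band generator `(a+m+1 a)`, written as the conjugate of its top Artin generator
`s (a+m)` by a descending product. -/
def bd (s : ℕ → G) (a m : ℕ) : G := (dn s a m)⁻¹ * s (a + m) * dn s a m

/-- The usual form of a band generator, a descending word times an inverse one. -/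
lemma bd_eq {s : ℕ → G} {a m : ℕ} (h : Braided s a (m + 1)) :
    bd s a m = dn s a (m + 1) * (dn s (a + 1) m)⁻¹ := by
  rw [eq_mul_inv_iff_mul_eq]
  have := dn_mul_dn h m le_rfl
  calc bd s a m * dn s (a + 1) m
      = (dn s a m)⁻¹ * (dn s a (m + 1) * dn s (a + 1) m) := by simp only [bd, dn]; group
    _ = _ := by rw [this]; group

/-- A band generator commutes with the Artin generators nested strictly inside it. -/
lemma bd_comm {s : ℕ → G} {a m j : ℕ} (h : Braided s a (m + 1)) (h1 : a < j) (h2 : j < a + m) :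
    Commute (bd s a m) (s j) := by
  have e1 := dn_shift (i := j) (h.mono (by omega) (by omega) : Braided s (a + 1) m)
    (by omega) (by omega)
  have e2 := dn_shift (i := j) h (by omega) (by omega)
  rw [bd_eq h]
  have e3 : (dn s (a + 1) m)⁻¹ * s j = s (j + 1) * (dn s (a + 1) m)⁻¹ := by
    rw [inv_mul_eq_iff_eq_mul, ← mul_assoc, e1]; group
  show _ * _ = _ * _
  rw [mul_assoc, e3, ← mul_assoc, e2, mul_assoc]

/-! ### Zigzag factorization and unfolding -/

/-- The product `s a * s (a+2) * ⋯` of `m` factors; started at `a` and at `a + 1` it gives the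
two classes of pairwise commuting generators. -/
def alt (s : ℕ → G) (a : ℕ) : ℕ → G
  | 0 => 1
  | m + 1 => alt s a m * s (a + 2 * m)

/-- The product `(a+2m-1 a)(a+2m-2 a+1) ⋯` of the `m` parallel edges of odd length on the
points `a, …, a + 2m - 1`. -/
def cA (s : ℕ → G) (a : ℕ) : ℕ → G
  | 0 => 1
  | m + 1 => bd s a (2 * m) * cA s (a + 1) m

/-- The product `⋯ (a+2m-1 a+1)(a+2m a)` of the `m` parallel edges of even length on the
points `a, …, a + 2m`. -/
def cB (s : ℕ → G) (a : ℕ) : ℕ → G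
  | 0 => 1
  | m + 1 => cB s (a + 1) m * bd s a (2 * m + 1)

/-- The element `δ` on an odd number of points is the product of two parallel classes. -/
lemma delta_eq {s : ℕ → G} : ∀ {m a : ℕ}, Braided s a (2 * m) →
    dn s a (2 * m) = cA s a m * cB s a m
  | 0, a, _ => by simp [dn, cA, cB]
  | m + 1, a, h => by
    have ih := delta_eq (h.mono (by omega) (by omega) : Braided s (a + 1) (2 * m))
    have e := bd_eq (h.mono le_rfl (by omega) : Braided s a (2 * m + 1))
    calc dn s a (2 * m + 1 + 1) = dn s a (2 * m + 1) * bd s a (2 * m + 1) := by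
          simp only [bd, dn]; group
      _ = bd s a (2 * m) * dn s (a + 1) (2 * m) * bd s a (2 * m + 1) := by rw [e]; group
      _ = _ := by rw [ih]; simp only [cA, cB]; group

lemma alt_supported (s : ℕ → G) (a : ℕ) : ∀ m, Supported s a (2 * m - 1) (alt s a m)
  | 0 => Supported.one
  | m + 1 => ((alt_supported s a m).mono le_rfl (by omega)).mul
      (Supported.gen (by omega) (by omega))

lemma alt_shift {s : ℕ → G} {b : ℕ} {E : G} : ∀ {m : ℕ},
    (∀ i, b ≤ i → i < b + 2 * m - 1 → E⁻¹ * s i * E = s (i + 1)) →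
    E⁻¹ * alt s b m * E = alt s (b + 1) m
  | 0, _ => by simp [alt]
  | m + 1, h => by
    have ih := alt_shift (b := b) (m := m) fun i h1 h2 => h i h1 (by omega)
    have h0 := h (b + 2 * m) (by omega) (by omega)
    simp only [alt]
    rw [← ih, show b + 1 + 2 * m = b + 2 * m + 1 by omega, ← h0]; group

/-- A single braid carries the standard path to the zigzag: it conjugates the two classes of
alternate Artin generators to the two classes of parallel edges. The support of that braid avoids the top generator
`s (a+2m-1)`, so that in the recursion it fixes both outer edges, one of which ends at the top
vertex of the inner interval. -/
lemma exists_unfold {s : ℕ → G} : ∀ {m a : ℕ}, Braided s a (2 * m) →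
    ∃ g, Supported s a (2 * m - 1) g ∧ g * alt s a m * g⁻¹ = cA s a m ∧
      g * alt s (a + 1) m * g⁻¹ = cB s a m
  | 0, a, _ => ⟨1, Supported.one, by simp [alt, cA], by simp [alt, cB]⟩
  | m + 1, a, h => by
    obtain ⟨g, hg, hA, hB⟩ :=
      exists_unfold (h.mono (by omega) (by omega) : Braided s (a + 1) (2 * m))
    have hsh : ∀ i, a ≤ i → i < a + 2 * m →
        (dn s a (2 * m + 1))⁻¹ * s i * dn s a (2 * m + 1) = s (i + 1) := by
      intro i h1 h2
      have := dn_shift (i := i) (h.mono le_rfl (by omega) : Braided s a (2 * m + 1)) h1 (by omega)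
      rw [mul_assoc, ← this]; group
    have c1 : ∀ i, a + 1 ≤ i → i < a + 1 + 2 * m → Commute (bd s a (2 * m + 1)) (s i) :=
      fun i h1 h2 => bd_comm h (by omega) (by omega)
    have c0 : ∀ i, a + 1 ≤ i → i < a + 1 + (2 * m - 1) → Commute (bd s a (2 * m)) (s i) :=
      fun i h1 h2 => bd_comm (h.mono le_rfl (by omega)) (by omega) (by omega)
    have gA : g * bd s a (2 * m) = bd s a (2 * m) * g := (hg _ c0).symm
    have gB : g * bd s a (2 * m + 1) = bd s a (2 * m + 1) * g :=
      (hg _ fun i h1 h2 => c1 i h1 (by omega)).symm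
    have aA : alt s (a + 1) m * bd s a (2 * m) = bd s a (2 * m) * alt s (a + 1) m :=
      (alt_supported s (a + 1) m _ c0).symm
    have eA : (dn s a (2 * m + 1))⁻¹ * alt s a (m + 1) * dn s a (2 * m + 1)
        = bd s a (2 * m) * alt s (a + 1) m := by
      rw [← aA, ← alt_shift (m := m) (b := a) fun i h1 h2 => hsh i h1 (by omega)]
      simp only [alt, bd, dn]; group
    have eB : (dn s a (2 * m + 1))⁻¹ * alt s (a + 1) (m + 1) * dn s a (2 * m + 1)
        = alt s (a + 1 + 1) m * bd s a (2 * m + 1) := by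
      rw [← alt_shift (m := m) (b := a + 1) fun i h1 h2 => hsh i (by omega) (by omega)]
      simp only [alt, bd]
      rw [show a + 1 + 2 * m = a + (2 * m + 1) by omega]; group
    refine ⟨g * (dn s a (2 * m + 1))⁻¹, ?_, ?_, ?_⟩
    · exact (hg.mono (by omega) (by omega)).mul
        ((dn_supported s a (2 * m + 1)).mono le_rfl (by omega)).inv
    · calc _ = g * ((dn s a (2 * m + 1))⁻¹ * alt s a (m + 1) * dn s a (2 * m + 1)) * g⁻¹ := by
            group
        _ = (g * bd s a (2 * m)) * alt s (a + 1) m * g⁻¹ := by rw [eA]; group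
        _ = bd s a (2 * m) * (g * alt s (a + 1) m * g⁻¹) := by rw [gA]; group
        _ = _ := by rw [hA]; rfl
    · calc _ = g * ((dn s a (2 * m + 1))⁻¹ * alt s (a + 1) (m + 1) * dn s a (2 * m + 1)) * g⁻¹ :=
            by group
        _ = g * alt s (a + 1 + 1) m * g⁻¹ * (g * bd s a (2 * m + 1)) * g⁻¹ := by
            rw [eB]; group
        _ = (g * alt s (a + 1 + 1) m * g⁻¹) * bd s a (2 * m + 1) := by rw [gB]; group
        _ = _ := by rw [hB]; rfl

/-! ### Reordering the alternating word -/

/-- The word `s a * (s (a+1))⁻¹ * s (a+2) * ⋯` is conjugate to the one with all positive letters first.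
The bound on the support of the conjugator drives the induction. -/
lemma exists_alt_conj {s : ℕ → G} {a : ℕ} (w : ℕ → G) (w0 : w 0 = 1)
    (ws : ∀ m, w (m + 1) = w m * s (a + 2 * m) * (s (a + 2 * m + 1))⁻¹) :
    ∀ {m : ℕ}, Braided s a (2 * m) →
    ∃ h, Supported s a (2 * m - 1) h ∧ w m = h * (alt s a m * (alt s (a + 1) m)⁻¹) * h⁻¹
  | 0, _ => ⟨1, Supported.one, by simp [alt, w0]⟩
  | m + 1, hb => by
    obtain ⟨h, hs, hw⟩ := exists_alt_conj w w0 ws (hb.mono le_rfl (by omega) : Braided s a (2 * m))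
    have hx : Commute (s (a + 2 * m)) h := hs _ fun i h1 h2 =>
      (hb.comm i _ h1 (by omega) (by omega)).symm
    have hy : Commute (s (a + 2 * m + 1)) h := hs _ fun i h1 h2 =>
      (hb.comm i _ h1 (by omega) (by omega)).symm
    have xA : Commute (s (a + 2 * m)) (alt s a m) := alt_supported s a m _ fun i h1 h2 =>
      (hb.comm i _ h1 (by omega) (by omega)).symm
    have yA : Commute (s (a + 2 * m + 1)) (alt s a m) := alt_supported s a m _ fun i h1 h2 =>
      (hb.comm i _ h1 (by omega) (by omega)).symm
    set x := s (a + 2 * m)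
    set y := s (a + 2 * m + 1)
    set A := alt s a m with hA
    set B := alt s (a + 1) m with hB
    refine ⟨h * (A * B⁻¹), ?_, ?_⟩
    · refine (hs.mono le_rfl (by omega)).mul (((alt_supported s a m).mono le_rfl (by omega)).mul
        (((alt_supported s (a + 1) m).mono (by omega) ?_).inv))
      omega
    · have e1 : alt s a (m + 1) = A * x := rfl
      have e2 : alt s (a + 1) (m + 1) = B * y := by
        simp only [alt, hB, y]; congr 2; omega
      rw [ws, hw, e1, e2]
      have k1 : h⁻¹ * (x * y⁻¹) = (x * y⁻¹) * h⁻¹ :=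
        ((hx.mul_left hy.inv_left).inv_right).symm
      have k2 : (x * y⁻¹) * A = A * (x * y⁻¹) := xA.mul_left yA.inv_left
      calc h * (A * B⁻¹) * h⁻¹ * x * y⁻¹ = h * (A * B⁻¹) * (h⁻¹ * (x * y⁻¹)) := by group
        _ = h * (A * B⁻¹) * (x * y⁻¹ * A * A⁻¹) * h⁻¹ := by rw [k1]; group
        _ = _ := by rw [k2]; group

/-! ### Artin generators of the braid group -/

lemma dn_eq_prod (s : ℕ → G) (a : ℕ) : ∀ m,
    ((List.range m).map fun k => s (a + m - 1 - k)).prod = dn s a m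
  | 0 => by simp [dn]
  | m + 1 => by
    rw [List.range_succ_eq_map, List.map_cons, List.prod_cons, List.map_map, dn,
      ← dn_eq_prod s a m]
    congr 3
    funext k
    simp only [Function.comp]
    congr 1; omega

lemma dn_inv_eq_prod (s : ℕ → G) (a : ℕ) : ∀ m,
    ((List.range m).map fun k => (s (a + k))⁻¹).prod = (dn s a m)⁻¹
  | 0 => by simp [dn]
  | m + 1 => by
    rw [List.range_succ, List.map_append, List.prod_append, dn_inv_eq_prod s a m]
    simp [dn]

lemma cA_eq_prod (s : ℕ → G) : ∀ m a,
    ((List.range m).map fun k => bd s (a + k) (2 * (m - 1 - k))).prod = cA s a m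
  | 0, a => by simp [cA]
  | m + 1, a => by
    rw [List.range_succ_eq_map, List.map_cons, List.prod_cons, List.map_map, cA,
      ← cA_eq_prod s m (a + 1)]
    congr 3
    funext k
    simp only [Function.comp]
    congr 1 <;> omega

lemma gen_eq {n i : ℕ} (h1 : 1 ≤ i) (h2 : i ≤ n - 1) :
    braidGen n i = (PresentedGroup.of ⟨i - 1, by omega⟩ : PresentedGroup (braidRels n)) :=
  dif_pos ⟨h1, h2⟩

lemma braided_braidGen (n : ℕ) : Braided (braidGen n) 1 (n - 1) := by
  constructor
  · intro i j h1 h2 h3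
    rw [gen_eq (i := i) (by omega) (by omega), gen_eq (i := j) (by omega) (by omega)]
    have hr : (PresentedGroup.mk (braidRels n)) _ = 1 := PresentedGroup.one_of_mem
      (Or.inl ⟨⟨i - 1, by omega⟩, ⟨j - 1, by omega⟩, by simp only; omega, rfl⟩)
    simp only [map_mul, map_inv] at hr
    exact mul_inv_eq_iff_eq_mul.mp (mul_inv_eq_one.mp hr) |>.trans rfl
  · intro i h1 h2
    rw [gen_eq (i := i) (by omega) (by omega), gen_eq (i := i + 1) (by omega) (by omega)]
    have hr : (PresentedGroup.mk (braidRels n)) _ = 1 := PresentedGroup.one_of_mem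
      (Or.inr ⟨⟨i - 1, by omega⟩, ⟨i + 1 - 1, by omega⟩, by simp only; omega, rfl⟩)
    simp only [map_mul, map_inv] at hr
    exact mul_inv_eq_one.mp hr

lemma bandGen_eq_bd {n a k : ℕ} (h1 : 1 ≤ a) (h2 : a + k + 1 ≤ n) :
    bandGen n (a + k + 1) a = bd (braidGen n) a k := by
  rw [bd_eq ((braided_braidGen n).mono h1 (by omega)), ← dn_eq_prod, ← dn_inv_eq_prod, bandGen,
    show a + k + 1 - a = k + 1 by omega, show a + k + 1 - 1 - a = k by omega]
  rfl

end BraidZigzag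

open BraidZigzag

/-- for odd `n ≥ 3`, the braid
`β = δ⁻¹ ((n-1 1)(n-2 2) ⋯ ((n+1)/2 (n-1)/2))²` is conjugate to `α_n`. -/
theorem stmt_4 (n : ℕ) (hn : 3 ≤ n) (hodd : Odd n) :
    IsConj (braidAlpha n)
      ((braidDelta n)⁻¹ *
        (((List.range ((n - 1) / 2)).map fun k => bandGen n (n - (k + 1)) (k + 1)).prod) ^ 2) := by
  obtain ⟨m, rfl⟩ := hodd
  have hb : Braided (braidGen (2 * m + 1)) 1 (2 * m) := braided_braidGen (2 * m + 1)
  have hδ : braidDelta (2 * m + 1) = dn (braidGen (2 * m + 1)) 1 (2 * m) := by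
    rw [← dn_eq_prod, braidDelta]
    congr 3
    funext k
    congr 1; omega
  have hc : ((List.range ((2 * m + 1 - 1) / 2)).map fun k =>
      bandGen (2 * m + 1) (2 * m + 1 - (k + 1)) (k + 1)).prod
      = cA (braidGen (2 * m + 1)) 1 m := by
    rw [← cA_eq_prod, show (2 * m + 1 - 1) / 2 = m by omega]
    congr 1
    refine List.map_congr_left fun k hk => ?_
    have hk := List.mem_range.mp hk
    rw [← bandGen_eq_bd (by omega) (by omega)]
    congr 1 <;> omega
  obtain ⟨g, -, hA, hB⟩ := exists_unfold hb
  obtain ⟨h, -, hw⟩ := exists_alt_conj (s := braidGen (2 * m + 1)) (a := 1)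
    (fun j => ((List.range (2 * j)).map fun k =>
      braidGen (2 * m + 1) (k + 1) ^ ((-1 : ℤ) ^ k)).prod) (by simp)
    (fun j => by
      rw [show 2 * (j + 1) = 2 * j + 1 + 1 by ring, List.range_succ, List.range_succ]
      have e1 : (-1 : ℤ) ^ (2 * j) = 1 := by rw [pow_mul]; simp
      have e2 : (-1 : ℤ) ^ (2 * j + 1) = -1 := by rw [pow_succ, e1]; simp
      simp only [List.map_append, List.prod_append, List.map_cons, List.map_nil,
        List.prod_singleton, e1, e2, zpow_one, zpow_neg]
      rw [show 2 * j + 1 = 1 + 2 * j by omega]) hb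
  have hα : braidAlpha (2 * m + 1) = _ := hw
  rw [hδ, delta_eq hb, hc, hα, ← hA, ← hB, isConj_iff]
  -- `h⁻¹` undoes the reordering, `B⁻¹` turns `A * B⁻¹` into `B⁻¹ * A`, and `g` unfolds the path.
  refine ⟨g * (alt (braidGen (2 * m + 1)) (1 + 1) m)⁻¹ * h⁻¹, ?_⟩
  rw [pow_two]
  group
end

section
/- Let n ≥ 2 and let 1 ≤ s < t ≤ n−1. In the braid group B_n, δ^{-1} · (t s) · δ = (t+1 s+1), where δ = σ_{n−1} σ_{n−2} ⋯ σ_1. -/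
theorem braidGen_of_mem (n i : ℕ) (h : 1 ≤ i ∧ i ≤ n - 1) :
    braidGen n i = (PresentedGroup.of ⟨i - 1, by omega⟩ : PresentedGroup (braidRels n)) :=
  dif_pos h

theorem braidGen_of_not_mem (n i : ℕ) (h : ¬(1 ≤ i ∧ i ≤ n - 1)) : braidGen n i = 1 :=
  dif_neg h

theorem braidGen_comm (n i j : ℕ) (h : i + 2 ≤ j) :
    braidGen n i * braidGen n j = braidGen n j * braidGen n i := by
  by_cases hi : 1 ≤ i ∧ i ≤ n - 1
  · by_cases hj : 1 ≤ j ∧ j ≤ n - 1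
    · have key := PresentedGroup.one_of_mem (rels := braidRels n)
        (Or.inl ⟨⟨i - 1, by omega⟩, ⟨j - 1, by omega⟩, by simp only; omega, rfl⟩)
      simp only [map_mul, map_inv] at key
      rw [mul_inv_eq_one, mul_inv_eq_iff_eq_mul] at key
      rw [braidGen_of_mem n i hi, braidGen_of_mem n j hj]
      exact key
    · rw [braidGen_of_not_mem n j hj, mul_one, one_mul]
  · rw [braidGen_of_not_mem n i hi, mul_one, one_mul]

theorem braidGen_braid (n i : ℕ) (h1 : 1 ≤ i) (h2 : i + 1 ≤ n - 1) :
    braidGen n i * braidGen n (i + 1) * braidGen n i =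
      braidGen n (i + 1) * braidGen n i * braidGen n (i + 1) := by
  have key := PresentedGroup.one_of_mem (rels := braidRels n)
    (Or.inr ⟨⟨i - 1, by omega⟩, ⟨i + 1 - 1, by omega⟩, by simp only; omega, rfl⟩)
  simp only [map_mul, map_inv] at key
  rw [mul_inv_eq_one] at key
  rw [braidGen_of_mem n i ⟨h1, by omega⟩, braidGen_of_mem n (i + 1) ⟨by omega, h2⟩]
  exact key

/-- The descending word `σ_m σ_{m-1} ⋯ σ_1` in `B_n`; it is `δ` when `m = n - 1`. -/
def descWord (n : ℕ) : ℕ → BraidGroup n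
  | 0 => 1
  | m + 1 => braidGen n (m + 1) * descWord n m

theorem descWord_eq_prod (n m : ℕ) :
    ((List.range m).map fun k => braidGen n (m - k)).prod = descWord n m := by
  induction m with
  | zero => rfl
  | succ m ih =>
    rw [List.range_succ_eq_map, List.map_cons, List.prod_cons, List.map_map, descWord, ← ih]
    congr 2
    apply List.map_congr_left
    intro k _
    simp only [Function.comp_apply]
    congr 1
    omega

theorem braidGen_comm_descWord (n m j : ℕ) (h : m + 2 ≤ j) :
    braidGen n j * descWord n m = descWord n m * braidGen n j := by
  induction m with
  | zero => simp [descWord]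
  | succ m ih =>
    rw [descWord, ← mul_assoc, ← braidGen_comm n (m + 1) j h, mul_assoc, ih (by omega),
      mul_assoc]

/-- Pushing `σ_i` from left to right through `σ_m ⋯ σ_1` raises its index by one. -/
theorem braidGen_mul_descWord (n i m : ℕ) (hi : 1 ≤ i) (him : i + 1 ≤ m) (hm : m ≤ n - 1) :
    braidGen n i * descWord n m = descWord n m * braidGen n (i + 1) := by
  induction m, him using Nat.le_induction with
  | base =>
    obtain ⟨i, rfl⟩ := Nat.exists_eq_add_of_le' hi
    rw [descWord, descWord, ← mul_assoc, ← mul_assoc, braidGen_braid n (i + 1) hi hm, mul_assoc,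
      braidGen_comm_descWord n i (i + 1 + 1) (by omega)]
    simp only [mul_assoc]
  | succ m him ih =>
    rw [descWord, ← mul_assoc, braidGen_comm n i (m + 1) (by omega), mul_assoc, ih (by omega),
      mul_assoc]

theorem conj_braidGen (n i : ℕ) (hi : 1 ≤ i) (h : i + 1 ≤ n - 1) :
    MulAut.conj (braidDelta n)⁻¹ (braidGen n i) = braidGen n (i + 1) := by
  rw [MulAut.conj_apply, inv_inv, mul_assoc, braidDelta, descWord_eq_prod,
    braidGen_mul_descWord n i (n - 1) hi h le_rfl, inv_mul_cancel_left]

/-- conjugation by `δ` shifts band generators: `δ⁻¹ (t s) δ = (t+1 s+1)`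
for `1 ≤ s < t ≤ n - 1`. -/
theorem stmt_5 (n s t : ℕ) (hn : 2 ≤ n) (hs : 1 ≤ s) (hst : s < t) (ht : t ≤ n - 1) :
    (braidDelta n)⁻¹ * bandGen n t s * braidDelta n = bandGen n (t + 1) (s + 1) := by
  have hconj : (braidDelta n)⁻¹ * bandGen n t s * braidDelta n =
      MulAut.conj (braidDelta n)⁻¹ (bandGen n t s) := by
    rw [MulAut.conj_apply, inv_inv]
  rw [hconj, bandGen, bandGen, map_mul, map_list_prod, map_list_prod, List.map_map, List.map_map,
    show t + 1 - (s + 1) = t - s by omega, show t + 1 - 1 - (s + 1) = t - 1 - s by omega]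
  congr 2
  · apply List.map_congr_left
    intro k hk
    rw [List.mem_range] at hk
    rw [Function.comp_apply, conj_braidGen n _ (by omega) (by omega)]
    congr 1
    omega
  · apply List.map_congr_left
    intro k hk
    rw [List.mem_range] at hk
    rw [Function.comp_apply, map_inv, conj_braidGen n _ (by omega) (by omega)]
    congr 2
    omega
end

section
/- Let n ≥ 3. In the braid group B_n, (n 2) · (n n−1 n−2 … 2) = (n n−1 n−2 … 2) · (3 2). -/
theorem bandGen_succ_self (n s : ℕ) : bandGen n (s + 1) s = braidGen n s := by
  simp [bandGen]

/-- `f(m+2) ⋯ f(3)` is cancelled on the left by `f(3)⁻¹ ⋯ f(m+2)⁻¹`. -/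
theorem prod_inv_mul_prod_desc {G : Type*} [Group G] (f : ℕ → G) (m : ℕ) :
    ((List.range m).map fun k => (f (3 + k))⁻¹).prod *
      ((List.range m).map fun k => f (m + 2 - k)).prod = 1 := by
  induction m with
  | zero => simp
  | succ m ih =>
    rw [List.prod_range_succ, List.prod_range_succ']
    have h : (fun k => f (m + 1 + 2 - (k + 1))) = fun k => f (m + 2 - k) := by
      funext k
      congr 1
      omega
    have h' : m + 1 + 2 - 0 = 3 + m := by omega
    simp only [h, h', mul_assoc, inv_mul_cancel_left]
    exact ih

theorem descCycle_eq_prod (m : ℕ) :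
    descCycle (m + 3) ((List.range (m + 3 - 1)).map fun k => m + 3 - k) =
      ((List.range (m + 1)).map fun k => braidGen (m + 3) (m + 2 - k)).prod := by
  unfold descCycle
  congr 1
  apply List.ext_getElem
  · simp
  · intro i h₁ h₂
    simp only [List.length_map, List.length_range] at h₂
    have h : m + 3 - i = (m + 2 - i) + 1 := by omega
    have h' : m + 3 - (i + 1) = m + 2 - i := by omega
    simp [h, h', bandGen_succ_self]

/-- `(n 2) ⋅ (n n-1 n-2 … 2) = (n n-1 n-2 … 2) ⋅ (3 2)` in `B_n`, `n ≥ 3`. -/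
theorem stmt_6 (n : ℕ) (hn : 3 ≤ n) :
    bandGen n n 2 * descCycle n ((List.range (n - 1)).map fun k => n - k) =
      descCycle n ((List.range (n - 1)).map fun k => n - k) * bandGen n 3 2 := by
  obtain ⟨m, rfl⟩ : ∃ m, n = m + 3 := ⟨n - 3, by omega⟩
  have hD : ((List.range (m + 1)).map fun k => braidGen (m + 3) (m + 2 - k)).prod =
      ((List.range m).map fun k => braidGen (m + 3) (m + 2 - k)).prod * braidGen (m + 3) 2 := by
    rw [List.prod_range_succ]
    congr 2
    omega
  have hB : bandGen (m + 3) (m + 3) 2 =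
      ((List.range (m + 1)).map fun k => braidGen (m + 3) (m + 2 - k)).prod *
        ((List.range m).map fun k => (braidGen (m + 3) (3 + k))⁻¹).prod := rfl
  rw [descCycle_eq_prod, hB, bandGen_succ_self, mul_assoc]
  congr 1
  rw [hD, ← mul_assoc, prod_inv_mul_prod_desc, one_mul]
end

section
/- Let n ≥ 3 be odd. In the braid group B_n, the element β := δ^{-1} · ( (n−1 1)(n−2 2) ⋯ ((n+1)/2 (n−1)/2) )^2 is conjugate to the element σ_{n−2}^{-1} σ_{n−4}^{-1} ⋯ σ_1^{-1} · σ_{n−1} σ_{n−3} ⋯ σ_2 (the product of the inverses of the odd-indexed generators in decreasing order of index followed by the product of the even-indexed generators in decreasing order of index). -/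
/-! ### Zigzags in a group with braid relations -/

/-- The elements `σ 1, …, σ (N - 1)` satisfy the braid relations of the braid group on `N`
strands; the other values of `σ` are unconstrained. -/
structure BraidSeq {G : Type*} [Group G] (σ : ℕ → G) (N : ℕ) : Prop where
  far : ∀ i j, 1 ≤ i → i + 2 ≤ j → j < N → σ i * σ j = σ j * σ i
  braid : ∀ i, 1 ≤ i → i + 1 < N → σ i * σ (i + 1) * σ i = σ (i + 1) * σ i * σ (i + 1)

namespace BraidSeq

variable {G : Type*} [Group G]

/-- The rotation `σ_{a+k-1} ⋯ σ_{a+1} σ_a` of the block of `k + 1` strands starting at `a`. -/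
def rot (σ : ℕ → G) (a : ℕ) : ℕ → G
  | 0 => 1
  | k + 1 => σ (a + k) * rot σ a k

/-- The band generator `(a+k+1 a)`. -/
def band (σ : ℕ → G) (a k : ℕ) : G := rot σ a (k + 1) * (rot σ (a + 1) k)⁻¹

/-- The product `(a+2j-1 a)(a+2j-2 a+1) ⋯ (a+j a+j-1)` of `j` nested band generators. -/
def zigX (σ : ℕ → G) : ℕ → ℕ → G
  | _, 0 => 1
  | a, j + 1 => band σ a (2 * j) * zigX σ (a + 1) j

/-- The product `(a+2j a)(a+2j-1 a+1) ⋯ (a+j+1 a+j-1)` of `j` nested band generators. -/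
def zigY (σ : ℕ → G) : ℕ → ℕ → G
  | _, 0 => 1
  | a, j + 1 => band σ a (2 * j + 1) * zigY σ (a + 1) j

/-- The product `σ_a σ_{a+2} ⋯ σ_{a+2j-2}` of every second generator. -/
def alt (σ : ℕ → G) : ℕ → ℕ → G
  | _, 0 => 1
  | a, j + 1 => σ a * alt σ (a + 2) j

/-- The braid straightening the zigzag path through the strands `a, …, a+2j`: the product of the
inverse rotations of the nested blocks `[a, a+2j]`, `[a+1, a+2j-1]`, …. -/
def straighten (σ : ℕ → G) : ℕ → ℕ → G
  | _, 0 => 1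
  | a, j + 1 => (rot σ a (2 * j + 2))⁻¹ * straighten σ (a + 1) j

variable {σ : ℕ → G} {N : ℕ}

theorem rot_succ' (σ : ℕ → G) (a k : ℕ) : rot σ a (k + 1) = rot σ (a + 1) k * σ a := by
  induction k with
  | zero => simp [rot]
  | succ k ih =>
    rw [rot, ih, rot, show a + (k + 1) = a + 1 + k by omega, mul_assoc]

theorem commute_rot {x : G} {a k : ℕ} (h : ∀ i, a ≤ i → i < a + k → Commute x (σ i)) :
    Commute x (rot σ a k) := by
  induction k with
  | zero => exact Commute.one_right x
  | succ k ih =>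
    exact (h _ (by omega) (by omega)).mul_right (ih fun i h1 h2 => h i h1 (by omega))

theorem commute_band {x : G} {a k : ℕ} (h : ∀ i, a ≤ i → i < a + k + 1 → Commute x (σ i)) :
    Commute x (band σ a k) :=
  (commute_rot fun i h1 h2 => h i h1 (by omega)).mul_right
    (commute_rot fun i h1 h2 => h i (by omega) (by omega)).inv_right

theorem commute_zigX {x : G} {a j : ℕ} (h : ∀ i, a ≤ i → i + 1 < a + 2 * j → Commute x (σ i)) :
    Commute x (zigX σ a j) := by
  induction j generalizing a with
  | zero => exact Commute.one_right x
  | succ j ih =>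
    exact (commute_band fun i h1 h2 => h i h1 (by omega)).mul_right
      (ih fun i h1 h2 => h i (by omega) (by omega))

theorem commute_straighten {x : G} {a j : ℕ}
    (h : ∀ i, a ≤ i → i < a + 2 * j → Commute x (σ i)) : Commute x (straighten σ a j) := by
  induction j generalizing a with
  | zero => exact Commute.one_right x
  | succ j ih =>
    exact (commute_rot fun i h1 h2 => h i h1 (by omega)).inv_right.mul_right
      (ih fun i h1 h2 => h i (by omega) (by omega))

theorem commute_alt {x : G} {a j : ℕ} (h : ∀ i, a ≤ i → i + 1 < a + 2 * j → Commute x (σ i)) :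
    Commute x (alt σ a j) := by
  induction j generalizing a with
  | zero => exact Commute.one_right x
  | succ j ih =>
    exact (h a le_rfl (by omega)).mul_right (ih fun i h1 h2 => h i (by omega) (by omega))

/-- Conjugation by the rotation of a block lowers the index of an inner generator by one. -/
theorem mul_rot (H : BraidSeq σ N) {a k i : ℕ} (ha : 1 ≤ a) (hN : a + k ≤ N) (hi : a ≤ i)
    (hik : i + 1 < a + k) : σ i * rot σ a k = rot σ a k * σ (i + 1) := by
  induction k with
  | zero => omega
  | succ k ih =>
    rcases Nat.lt_or_ge (i + 1) (a + k) with h | h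
    · rw [rot, ← mul_assoc, H.far i (a + k) (by omega) (by omega) (by omega), mul_assoc,
        ih (by omega) h, mul_assoc]
    · -- Here `i + 1` is the top index of the block, and the braid relation applies.
      obtain ⟨l, rfl⟩ : ∃ l, k = l + 1 := ⟨k - 1, by omega⟩
      obtain rfl : i = a + l := by omega
      have hc : Commute (σ (a + l + 1)) (rot σ a l) := commute_rot fun i h1 h2 =>
        (H.far i (a + l + 1) (by omega) (by omega) (by omega)).symm
      rw [rot, rot, show a + (l + 1) = a + l + 1 by omega, mul_assoc, mul_assoc, ← hc.eq]
      simp only [← mul_assoc]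
      rw [H.braid _ (by omega) (by omega)]

theorem rot_mul_alt (H : BraidSeq σ N) {a k c j : ℕ} (ha : 1 ≤ a) (hN : a + k ≤ N) (hc : a ≤ c)
    (hk : c + 2 * j ≤ a + k) :
    (rot σ a k)⁻¹ * alt σ c j = alt σ (c + 1) j * (rot σ a k)⁻¹ := by
  induction j generalizing c with
  | zero => simp [alt]
  | succ j ih =>
    have h1 : (rot σ a k)⁻¹ * σ c = σ (c + 1) * (rot σ a k)⁻¹ := by
      rw [inv_mul_eq_iff_eq_mul, ← mul_assoc, eq_mul_inv_iff_mul_eq]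
      exact H.mul_rot ha hN hc (by omega)
    rw [alt, alt, ← mul_assoc, h1, mul_assoc, ih (by omega) (by omega), mul_assoc]

/-- A chord commutes with the generators supported strictly inside it. -/
theorem band_comm (H : BraidSeq σ N) {a k i : ℕ} (ha : 1 ≤ a) (hN : a + k + 1 ≤ N) (hi : a < i)
    (hik : i < a + k) : Commute (band σ a k) (σ i) := by
  have h1 : band σ a k = rot σ a (k + 1) * σ a * (rot σ a (k + 1))⁻¹ := by
    rw [band, rot_succ']
    group
  have h2 : σ i = rot σ a (k + 1) * σ (i + 1) * (rot σ a (k + 1))⁻¹ := by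
    rw [eq_mul_inv_iff_mul_eq]
    exact H.mul_rot ha (by omega) hi.le (by omega)
  rw [h1, h2, Commute.conj_iff]
  exact H.far a (i + 1) ha (by omega) (by omega)

theorem band_succ (σ : ℕ → G) (a k : ℕ) :
    band σ a (k + 1) = σ (a + k + 1) * band σ a k * (σ (a + k + 1))⁻¹ := by
  rw [band, band, rot, rot.eq_2 σ (a + 1) k, show a + (k + 1) = a + k + 1 by omega,
    show a + 1 + k = a + k + 1 by omega, mul_inv_rev]
  simp only [mul_assoc]

/-- The chords `(a+k+1 a)` and `(a+k+2 a+k+1)` share one endpoint, hence satisfy the braid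
relation. -/
theorem band_braid (H : BraidSeq σ N) {a k : ℕ} (ha : 1 ≤ a) (hN : a + k + 1 < N) :
    band σ a k * σ (a + k + 1) * band σ a k
      = σ (a + k + 1) * band σ a k * σ (a + k + 1) := by
  induction k with
  | zero => simpa [band, rot] using H.braid a ha (by omega)
  | succ k ih =>
    have hu := ih (by omega)
    have hpq := H.braid (a + k + 1) (by omega) (by omega)
    have hq : Commute (σ (a + k + 1 + 1)) (band σ a k) := commute_band fun i h1 h2 =>
      (H.far i (a + k + 1 + 1) (by omega) (by omega) (by omega)).symm
    -- By induction the longer chord is also a conjugate of `σ (a + k + 1)` by `band σ a k`,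
    -- which commutes with `σ (a + k + 2)`.
    have h1 : band σ a (k + 1) = (band σ a k)⁻¹ * σ (a + k + 1) * band σ a k := by
      rw [band_succ, mul_inv_eq_iff_eq_mul, mul_assoc, mul_assoc, eq_inv_mul_iff_mul_eq,
        ← mul_assoc, ← mul_assoc, hu]
    have h2 : σ (a + k + 1 + 1) = (band σ a k)⁻¹ * σ (a + k + 1 + 1) * band σ a k := by
      rw [mul_assoc, hq.eq, inv_mul_cancel_left]
    rw [show a + (k + 1) + 1 = a + k + 1 + 1 by omega, h1, h2]
    generalize band σ a k = u at *
    calc _ = u⁻¹ * (σ (a + k + 1) * σ (a + k + 1 + 1) * σ (a + k + 1)) * u := by group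
      _ = _ := by rw [hpq]; group

/-- The two families of parallel chords multiply to the rotation of the block. -/
theorem zigX_mul_zigY (H : BraidSeq σ N) {a j : ℕ} (ha : 1 ≤ a) (hN : a + 2 * j ≤ N) :
    zigX σ a j * zigY σ a j = rot σ a (2 * j) := by
  induction j generalizing a with
  | zero => simp [zigX, zigY, rot]
  | succ j ih =>
    have hc : Commute (band σ a (2 * j + 1)) (zigX σ (a + 1) j) := commute_zigX fun i h1 h2 =>
      H.band_comm ha (by omega) (by omega) (by omega)
    have hb := H.band_braid (k := 2 * j) ha (by omega)
    have hd : band σ a (2 * j) * rot σ (a + 1) (2 * j) = rot σ a (2 * j + 1) := by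
      simp [band]
    calc zigX σ a (j + 1) * zigY σ a (j + 1)
        = band σ a (2 * j) * (zigX σ (a + 1) j * band σ a (2 * j + 1)) * zigY σ (a + 1) j := by
          simp only [zigX, zigY, mul_assoc]
      _ = band σ a (2 * j) * band σ a (2 * j + 1) * (zigX σ (a + 1) j * zigY σ (a + 1) j) := by
          rw [← hc.eq]; simp only [mul_assoc]
      _ = (band σ a (2 * j) * σ (a + 2 * j + 1) * band σ a (2 * j)) * (σ (a + 2 * j + 1))⁻¹
            * rot σ (a + 1) (2 * j) := by
          rw [ih (by omega) (by omega), band_succ]; simp only [mul_assoc]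
      _ = σ (a + 2 * j + 1) * (band σ a (2 * j) * rot σ (a + 1) (2 * j)) := by
          rw [hb]; group
      _ = rot σ a (2 * (j + 1)) := by
          rw [hd, show 2 * (j + 1) = 2 * j + 1 + 1 by omega, rot.eq_2 σ a (2 * j + 1),
            show a + (2 * j + 1) = a + 2 * j + 1 by omega]

/-- Straightening the inner block turns the chord attached to its last point into `σ a`. -/
theorem straighten_mul_band (H : BraidSeq σ N) {a j : ℕ} (ha : 1 ≤ a) (hN : a + 2 * j + 1 ≤ N) :
    straighten σ (a + 1) j * band σ a (2 * j) = σ a * straighten σ (a + 1) j := by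
  cases j with
  | zero => simp [straighten, band, rot]
  | succ j =>
    have hc : Commute (band σ a (2 * (j + 1))) (straighten σ (a + 1 + 1) j) :=
      commute_straighten fun i h1 h2 => H.band_comm ha (by omega) (by omega) (by omega)
    rw [straighten, mul_assoc, ← hc.eq, band, rot_succ' σ a, show 2 * (j + 1) = 2 * j + 2 by omega]
    group

theorem straighten_mul_zigX (H : BraidSeq σ N) {a j : ℕ} (ha : 1 ≤ a) (hN : a + 2 * j ≤ N) :
    straighten σ a j * zigX σ a j = alt σ (a + 1) j * straighten σ a j := by
  induction j generalizing a with
  | zero => simp [straighten, zigX, alt]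
  | succ j ih =>
    have h := H.rot_mul_alt (k := 2 * j + 2) (c := a) (j := j + 1) ha (by omega) le_rfl (by omega)
    calc straighten σ a (j + 1) * zigX σ a (j + 1)
        = (rot σ a (2 * j + 2))⁻¹ * (straighten σ (a + 1) j * band σ a (2 * j))
            * zigX σ (a + 1) j := by
          simp only [straighten, zigX, mul_assoc]
      _ = (rot σ a (2 * j + 2))⁻¹ * σ a * (straighten σ (a + 1) j * zigX σ (a + 1) j) := by
          rw [H.straighten_mul_band ha (by omega)]; simp only [mul_assoc]
      _ = (rot σ a (2 * j + 2))⁻¹ * alt σ a (j + 1) * straighten σ (a + 1) j := by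
          rw [ih (by omega) (by omega), alt]; simp only [mul_assoc]
      _ = _ := by rw [h, straighten, mul_assoc]

theorem straighten_mul_zigY (H : BraidSeq σ N) {a j : ℕ} (ha : 1 ≤ a) (hN : a + 2 * j ≤ N) :
    straighten σ a j * zigY σ a j = alt σ a j * straighten σ a j := by
  induction j generalizing a with
  | zero => simp [straighten, zigY, alt]
  | succ j ih =>
    have h := H.rot_mul_alt (k := 2 * j + 2) (c := a + 1) (j := j) ha (by omega) (by omega)
      (by omega)
    have hc : Commute (band σ a (2 * j + 1)) (straighten σ (a + 1) j) :=
      commute_straighten fun i h1 h2 => H.band_comm ha (by omega) (by omega) (by omega)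
    have hb : (rot σ a (2 * j + 2))⁻¹ * band σ a (2 * j + 1)
        = σ a * (rot σ a (2 * j + 2))⁻¹ := by
      rw [band, rot_succ']
      group
    calc straighten σ a (j + 1) * zigY σ a (j + 1)
        = (rot σ a (2 * j + 2))⁻¹ * (straighten σ (a + 1) j * band σ a (2 * j + 1))
            * zigY σ (a + 1) j := by
          simp only [straighten, zigY, mul_assoc]
      _ = (rot σ a (2 * j + 2))⁻¹ * band σ a (2 * j + 1)
            * (straighten σ (a + 1) j * zigY σ (a + 1) j) := by
          rw [← hc.eq]; simp only [mul_assoc]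
      _ = σ a * ((rot σ a (2 * j + 2))⁻¹ * alt σ (a + 1) j) * straighten σ (a + 1) j := by
          rw [hb, ih (by omega) (by omega)]; simp only [mul_assoc]
      _ = _ := by rw [h, straighten, alt]; simp only [mul_assoc]

/-! ### Products over lists -/

theorem prod_desc (σ : ℕ → G) (a k : ℕ) :
    ((List.range k).map fun i => σ (a + k - 1 - i)).prod = rot σ a k := by
  induction k with
  | zero => simp [rot]
  | succ k ih =>
    rw [List.range_succ_eq_map, List.map_cons, List.prod_cons, List.map_map, rot, ← ih]
    congr 2
    refine List.map_congr_left fun i _ => ?_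
    simp only [Function.comp]
    congr 1
    omega

theorem prod_inv_asc (σ : ℕ → G) (a k : ℕ) :
    ((List.range k).map fun i => (σ (a + i))⁻¹).prod = (rot σ a k)⁻¹ := by
  induction k with
  | zero => simp [rot]
  | succ k ih => rw [List.range_succ, List.map_append, List.prod_append, ih]; simp [rot]

theorem prod_alt (H : BraidSeq σ N) {a j : ℕ} (ha : 1 ≤ a) (hN : a + 2 * j ≤ N + 1) :
    ((List.range j).map fun k => σ (a + 2 * j - 2 - 2 * k)).prod = alt σ a j := by
  induction j generalizing a with
  | zero => simp [alt]
  | succ j ih =>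
    have hc : Commute (σ a) (alt σ (a + 2) j) := commute_alt fun i h1 h2 =>
      H.far a i ha (by omega) (by omega)
    rw [List.range_succ, List.map_append, List.prod_append, alt, hc.eq,
      ← ih (by omega) (by omega), List.map_singleton, List.prod_singleton]
    congr 1
    · congr 1
      refine List.map_congr_left fun i _ => ?_
      congr 1
      omega
    · congr 1
      omega

theorem prod_inv_alt (σ : ℕ → G) (a j : ℕ) :
    ((List.range j).map fun k => (σ (a + 2 * j - 2 - 2 * k))⁻¹).prod = (alt σ a j)⁻¹ := by
  induction j generalizing a with
  | zero => simp [alt]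
  | succ j ih =>
    rw [List.range_succ, List.map_append, List.prod_append, alt, mul_inv_rev, ← ih,
      List.map_singleton, List.prod_singleton]
    congr 1
    · congr 1
      refine List.map_congr_left fun i _ => ?_
      congr 2
      omega
    · congr 2
      omega

end BraidSeq

/-! ### The braid group -/

open BraidSeq

/-- The quotient map from the free group, with codomain stated as `BraidGroup n`. -/
def braidMk (n : ℕ) : FreeGroup (Fin (n - 1)) →* BraidGroup n := PresentedGroup.mk (braidRels n)

theorem braidGen_eq {n i : ℕ} (h : 1 ≤ i ∧ i ≤ n - 1) :
    braidGen n i = braidMk n (FreeGroup.of ⟨i - 1, by omega⟩) := dif_pos h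

theorem braidMk_eq_one {n : ℕ} {r : FreeGroup (Fin (n - 1))} (h : r ∈ braidRels n) :
    braidMk n r = 1 := PresentedGroup.one_of_mem h

theorem braidSeq_braidGen (n : ℕ) : BraidSeq (braidGen n) n where
  far i j h1 h2 h3 := by
    have h := braidMk_eq_one (n := n)
      (Or.inl ⟨⟨i - 1, by omega⟩, ⟨j - 1, by omega⟩, by simp only; omega, rfl⟩)
    rw [braidGen_eq (by omega), braidGen_eq (by omega)]
    simp only [map_mul, map_inv] at h
    exact mul_inv_eq_iff_eq_mul.1 (mul_inv_eq_one.1 h)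
  braid i h1 h2 := by
    have h := braidMk_eq_one (n := n)
      (Or.inr ⟨⟨i - 1, by omega⟩, ⟨i + 1 - 1, by omega⟩, by simp only; omega, rfl⟩)
    rw [braidGen_eq (by omega), braidGen_eq (by omega)]
    simp only [map_mul, map_inv] at h
    exact mul_inv_eq_one.1 h

theorem bandGen_eq_band (n t s k : ℕ) (h : t = s + k + 1) :
    bandGen n t s = band (braidGen n) s k := by
  subst h
  rw [bandGen, band, ← prod_desc, ← prod_inv_asc, show s + k + 1 - s = k + 1 by omega,
    show s + k + 1 - 1 - s = k by omega]
  rfl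

theorem prod_bandGen (n a j : ℕ) :
    ((List.range j).map fun k => bandGen n (a + 2 * j - (k + 1)) (a + k)).prod
      = zigX (braidGen n) a j := by
  induction j generalizing a with
  | zero => simp [zigX]
  | succ j ih =>
    rw [List.range_succ_eq_map, List.map_cons, List.prod_cons, List.map_map, zigX, ← ih]
    congr 1
    · exact bandGen_eq_band _ _ _ _ (by omega)
    · congr 1
      refine List.map_congr_left fun i _ => ?_
      simp only [Function.comp]
      congr 1 <;> omega

/-- for odd `n ≥ 3`, the braid
`β = δ⁻¹ ((n-1 1)(n-2 2) ⋯ ((n+1)/2 (n-1)/2))²` is conjugate to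
`σ_{n-2}⁻¹ σ_{n-4}⁻¹ ⋯ σ_1⁻¹ ⋅ σ_{n-1} σ_{n-3} ⋯ σ_2`. -/
theorem stmt_8 (n : ℕ) (hn : 3 ≤ n) (hodd : Odd n) :
    IsConj
      ((braidDelta n)⁻¹ *
        (((List.range ((n - 1) / 2)).map fun k => bandGen n (n - (k + 1)) (k + 1)).prod) ^ 2)
      ((((List.range ((n - 1) / 2)).map fun k => (braidGen n (n - 2 - 2 * k))⁻¹).prod) *
        (((List.range ((n - 1) / 2)).map fun k => braidGen n (n - 1 - 2 * k)).prod)) := by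
  obtain ⟨m, rfl⟩ := hodd
  have H := braidSeq_braidGen (2 * m + 1)
  have hδ : braidDelta (2 * m + 1) = rot (braidGen (2 * m + 1)) 1 (2 * m) := by
    rw [← prod_desc, braidDelta, show 2 * m + 1 - 1 = 2 * m by omega,
      show 1 + 2 * m - 1 = 2 * m by omega]
  have hX := prod_bandGen (2 * m + 1) 1 m
  have hO := prod_inv_alt (braidGen (2 * m + 1)) 1 m
  have hE := H.prod_alt (a := 2) (j := m) (by omega) (by omega)
  rw [show 2 + 2 * m - 2 = 2 * m by omega] at hE
  rw [show 1 + 2 * m - 2 = 2 * m + 1 - 2 by omega] at hO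
  simp only [Nat.add_comm 1] at hX
  rw [show (2 * m + 1 - 1) / 2 = m by omega, hX, hO, show 2 * m + 1 - 1 = 2 * m by omega, hE, hδ,
    ← H.zigX_mul_zigY le_rfl (by omega), isConj_iff]
  have hx := H.straighten_mul_zigX (a := 1) (j := m) le_rfl (by omega)
  have hy := H.straighten_mul_zigY (a := 1) (j := m) le_rfl (by omega)
  refine ⟨straighten (braidGen (2 * m + 1)) 1 m, ?_⟩
  rw [← mul_inv_eq_iff_eq_mul] at hx hy
  rw [← hx, ← hy]
  group
end

section
/- Let n ≥ 3 be odd. In the braid group B_n, ( (n−1 1)(n−2 2) ⋯ ((n+1)/2 (n−1)/2) ) · ( (n 1)(n−1 2) ⋯ ((n+3)/2 (n−1)/2) ) = δ. -/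
namespace BraidFactor

variable {G : Type*} [Group G]

/-- The descending product `s (a+k-1) ⋯ s (a+1) s a` of `k` consecutive generators. -/
def desc (s : ℕ → G) (a : ℕ) : ℕ → G
  | 0 => 1
  | k + 1 => s (a + k) * desc s a k

/-- The band generator `(a+k+1 a)`; the shift by one makes every pair `(a, k)` meaningful. -/
def band (s : ℕ → G) (a k : ℕ) : G := desc s a (k + 1) * (desc s (a + 1) k)⁻¹

/-- The nested product `(a+k a)(a+k-1 a+1)(a+k-2 a+2) ⋯`, stopping when the two entries meet or
cross. The truncated `k - 1` is harmless: for `k = 0` the remaining product is empty. -/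
def nest (s : ℕ → G) (a : ℕ) : ℕ → G
  | 0 => 1
  | k + 1 => band s a k * nest s (a + 1) (k - 1)
termination_by k => k

/-- The braid relations for `s 1, …, s (n-1)`. Far commutativity is required of all positive
indices, since the out-of-range values of `braidGen` are `1`. -/
structure IsBraid (s : ℕ → G) (n : ℕ) : Prop where
  comm : ∀ i j, 1 ≤ i → i + 2 ≤ j → Commute (s i) (s j)
  braid : ∀ i, 1 ≤ i → i + 1 < n → s i * s (i + 1) * s i = s (i + 1) * s i * s (i + 1)

theorem desc_succ_right (s : ℕ → G) (a k : ℕ) :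
    desc s a (k + 1) = desc s (a + 1) k * s a := by
  induction k with
  | zero => simp [desc]
  | succ k ih =>
    rw [desc, ih, desc, show a + (k + 1) = a + 1 + k by omega, mul_assoc]

theorem band_zero (s : ℕ → G) (a : ℕ) : band s a 0 = s a := by simp [band, desc]

theorem band_succ (s : ℕ → G) (a k : ℕ) :
    band s a (k + 1) = s (a + k + 1) * band s a k * (s (a + k + 1))⁻¹ := by
  rw [band, band, desc, desc.eq_2 s (a + 1) k, show a + (k + 1) = a + k + 1 by omega,
    show a + 1 + k = a + k + 1 by omega]
  group

theorem commute_desc {s : ℕ → G} {x : G} {a k : ℕ}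
    (h : ∀ i, a ≤ i → i < a + k → Commute x (s i)) : Commute x (desc s a k) := by
  induction k with
  | zero => exact Commute.one_right x
  | succ k ih =>
    exact (h _ (by omega) (by omega)).mul_right (ih fun i h1 h2 => h i h1 (by omega))

theorem commute_band {s : ℕ → G} {x : G} {a k : ℕ}
    (h : ∀ i, a ≤ i → i ≤ a + k → Commute x (s i)) : Commute x (band s a k) :=
  (commute_desc fun i h1 h2 => h i h1 (by omega)).mul_right
    (commute_desc fun i h1 h2 => h i (by omega) (by omega)).inv_right

variable {s : ℕ → G} {n : ℕ}

/-- The braid relation between the band generator `(a+k+1 a)` and `s (a+k+1)`. Conjugating the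
relation between `s t` and `s (t+1)` by `(t a)`, which commutes with `s (t+1)`, turns `s t`
into `(t+1 a)`. -/
theorem band_braid (hs : IsBraid s n) (a k : ℕ) (ha : 1 ≤ a) (hk : a + k + 1 < n) :
    band s a k * s (a + k + 1) * band s a k =
      s (a + k + 1) * band s a k * s (a + k + 1) := by
  induction k with
  | zero => simpa [band_zero] using hs.braid a ha hk
  | succ k ih =>
    have h := ih (by omega)
    have hx : band s a (k + 1) = (band s a k)⁻¹ * s (a + k + 1) * band s a k := by
      rw [band_succ, mul_inv_eq_iff_eq_mul, mul_assoc, mul_assoc, eq_inv_mul_iff_mul_eq,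
        ← mul_assoc, ← mul_assoc]
      exact h
    have hc : Commute (s (a + k + 2)) (band s a k) :=
      commute_band fun i h1 h2 => (hs.comm i _ (by omega) (by omega)).symm
    have hb := hs.braid (a + k + 1) (by omega) (by omega)
    have hy : s (a + k + 2) = (band s a k)⁻¹ * s (a + k + 2) * band s a k := by
      rw [mul_assoc, hc.eq, inv_mul_cancel_left]
    rw [hx, show a + (k + 1) + 1 = a + k + 2 by omega, hy]
    have hconj : (band s a k)⁻¹ * (s (a + k + 1) * s (a + k + 2) * s (a + k + 1)) * band s a k =
        (band s a k)⁻¹ * (s (a + k + 2) * s (a + k + 1) * s (a + k + 2)) * band s a k := by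
      rw [hb]
    simpa [mul_assoc] using hconj

theorem band_mul_band_succ (hs : IsBraid s n) (a k : ℕ) (ha : 1 ≤ a) (hk : a + k + 1 < n) :
    band s a k * band s a (k + 1) = s (a + k + 1) * band s a k := by
  rw [band_succ, ← mul_assoc, ← mul_assoc, mul_inv_eq_iff_eq_mul]
  exact band_braid hs a k ha hk

/-- A descending product shifts the generators it involves down by one under conjugation. -/
theorem desc_mul (hs : IsBraid s n) (a k i : ℕ) (ha : 1 ≤ a) (hk : a + k ≤ n) (hi : a ≤ i)
    (hik : i + 1 < a + k) : desc s a k * s (i + 1) = s i * desc s a k := by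
  induction k with
  | zero => omega
  | succ k ih =>
    rcases Nat.lt_or_ge (i + 1) (a + k) with h | h
    · rw [desc, mul_assoc, ih (by omega) h, ← mul_assoc, ← mul_assoc,
        (hs.comm i (a + k) (by omega) (by omega)).eq]
    -- here `s (i+1)` is the leading generator, so the product begins `s (i+1) * s i`
    · obtain ⟨j, rfl⟩ : ∃ j, k = j + 1 := ⟨k - 1, by omega⟩
      obtain rfl : i = a + j := by omega
      have hc : Commute (s (a + j + 1)) (desc s a j) :=
        commute_desc fun l h1 h2 => (hs.comm l _ (by omega) (by omega)).symm
      have hb := hs.braid (a + j) (by omega) (by omega)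
      rw [desc, desc, show a + (j + 1) = a + j + 1 by omega]
      calc s (a + j + 1) * (s (a + j) * desc s a j) * s (a + j + 1)
          = s (a + j + 1) * s (a + j) * (desc s a j * s (a + j + 1)) := by simp only [mul_assoc]
        _ = s (a + j + 1) * s (a + j) * s (a + j + 1) * desc s a j := by
            rw [← hc.eq]; simp only [mul_assoc]
        _ = s (a + j) * (s (a + j + 1) * (s (a + j) * desc s a j)) := by
            rw [← hb]; simp only [mul_assoc]

theorem band_commute_gen (hs : IsBraid s n) (a k i : ℕ) (ha : 1 ≤ a) (hk : a + k < n)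
    (hi : a < i) (hik : i < a + k) : Commute (band s a k) (s i) := by
  have h1 := desc_mul hs a (k + 1) i ha (by omega) (by omega) (by omega)
  have h2 := desc_mul hs (a + 1) k i (by omega) (by omega) (by omega) (by omega)
  have h3 : (desc s (a + 1) k)⁻¹ * s i = s (i + 1) * (desc s (a + 1) k)⁻¹ := by
    rw [inv_mul_eq_iff_eq_mul, ← mul_assoc, h2, mul_inv_cancel_right]
  rw [Commute, SemiconjBy, band, mul_assoc, h3, ← mul_assoc, h1, mul_assoc]

theorem band_commute_band (hs : IsBraid s n) (a k b l : ℕ) (ha : 1 ≤ a) (hk : a + k < n)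
    (hb : a < b) (hl : b + l < a + k) : Commute (band s a k) (band s b l) :=
  commute_band fun i h1 h2 => band_commute_gen hs a k i ha hk (by omega) (by omega)

theorem band_commute_nest (hs : IsBraid s n) (a k b l : ℕ) (ha : 1 ≤ a) (hk : a + k < n)
    (hb : a < b) (hl : b + l ≤ a + k) : Commute (band s a k) (nest s b l) := by
  induction l using Nat.strong_induction_on generalizing b with
  | _ l ih =>
    cases l with
    | zero => rw [nest]; exact Commute.one_right _
    | succ l =>
      rw [nest]
      refine (band_commute_band hs a k b l ha hk hb (by omega)).mul_right ?_
      rcases l with _ | l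
      · rw [Nat.zero_sub, nest]; exact Commute.one_right _
      · exact ih l (by omega) (b + 1) (by omega) (by omega)

theorem band_mul_desc (s : ℕ → G) (a k : ℕ) :
    band s a k * desc s (a + 1) k = desc s a (k + 1) := by
  rw [band, inv_mul_cancel_right]

theorem nest_mul_nest (hs : IsBraid s n) (a k : ℕ) (ha : 1 ≤ a) (hk : a + k < n) :
    nest s a k * nest s a (k + 1) = desc s a (k + 1) := by
  induction k using Nat.strong_induction_on generalizing a with
  | _ k ih =>
    cases k with
    | zero => simp [nest, desc, band_zero]
    | succ k =>
      have h1 : nest s (a + 1) (k - 1) * nest s (a + 1) k = desc s (a + 1) k := by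
        cases k with
        | zero => simp [nest, desc]
        | succ k => exact ih k (by omega) (a + 1) (by omega) (by omega)
      have h2 : Commute (band s a (k + 1)) (nest s (a + 1) (k - 1)) :=
        band_commute_nest hs a (k + 1) (a + 1) (k - 1) ha hk (by omega) (by omega)
      rw [nest, nest, Nat.add_sub_cancel]
      calc band s a k * nest s (a + 1) (k - 1) * (band s a (k + 1) * nest s (a + 1) k)
          = band s a k * (nest s (a + 1) (k - 1) * band s a (k + 1)) * nest s (a + 1) k := by
            simp only [mul_assoc]
        _ = band s a k * band s a (k + 1) * (nest s (a + 1) (k - 1) * nest s (a + 1) k) := by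
            rw [← h2.eq]; simp only [mul_assoc]
        _ = s (a + k + 1) * (band s a k * desc s (a + 1) k) := by
            rw [h1, band_mul_band_succ hs a k ha (by omega), mul_assoc]
        _ = desc s a (k + 1 + 1) := by rw [band_mul_desc, desc.eq_2 s a (k + 1)]; rfl

theorem prod_eq_desc (s : ℕ → G) (a k : ℕ) :
    ((List.range k).map fun j => s (a + k - 1 - j)).prod = desc s a k := by
  induction k with
  | zero => rfl
  | succ k ih =>
    rw [List.range_succ_eq_map, List.map_cons, List.prod_cons, List.map_map, desc, ← ih]
    congr 2
    refine List.map_congr_left fun j _ => ?_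
    simp only [Function.comp]
    congr 1
    omega

theorem prod_inv_eq_desc (s : ℕ → G) (a k : ℕ) :
    ((List.range k).map fun j => (s (a + j))⁻¹).prod = (desc s a k)⁻¹ := by
  induction k with
  | zero => simp [desc]
  | succ k ih => simp [List.range_succ, desc, ih]

/-- The two parities of `nest` as products over `List.range m`: `c = 0` has `2m - 1` and `c = 1`
has `2m` as the difference of the outermost entries. -/
theorem prod_eq_nest (s : ℕ → G) (a m c : ℕ) (hc : c ≤ 1) :
    ((List.range m).map fun k => band s (a + k) (2 * (m - 1 - k) + c)).prod =
      nest s a (2 * m + c - 1) := by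
  induction m generalizing a with
  | zero => rw [show 2 * 0 + c - 1 = 0 by omega, nest]; rfl
  | succ m ih =>
    rw [List.range_succ_eq_map, List.map_cons, List.prod_cons, List.map_map,
      show 2 * (m + 1) + c - 1 = 2 * m + c + 1 by omega, nest, ← ih]
    congr 2
    refine List.map_congr_left fun j _ => ?_
    simp only [Function.comp]
    congr 1 <;> omega

theorem bandGen_eq (n t a k : ℕ) (h : t = a + k + 1) :
    bandGen n t a = band (braidGen n) a k := by
  subst h
  rw [bandGen, band, ← prod_eq_desc, ← prod_inv_eq_desc,
    show a + k + 1 - a = k + 1 by omega, show a + k + 1 - 1 - a = k by omega]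
  rfl

theorem braidGen_eq_of (n i : ℕ) (h : 1 ≤ i ∧ i ≤ n - 1) :
    braidGen n i = (PresentedGroup.of ⟨i - 1, by omega⟩ : PresentedGroup (braidRels n)) :=
  dif_pos h

theorem isBraid_braidGen (n : ℕ) : IsBraid (braidGen n) n where
  comm i j hi hij := by
    by_cases hj : j ≤ n - 1
    · rw [braidGen_eq_of n i ⟨hi, by omega⟩, braidGen_eq_of n j ⟨by omega, hj⟩]
      have h := PresentedGroup.one_of_mem (rels := braidRels n) (Or.inl
        ⟨⟨i - 1, by omega⟩, ⟨j - 1, by omega⟩, by simp only; omega, rfl⟩)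
      simp only [map_mul, map_inv] at h
      exact mul_inv_eq_iff_eq_mul.mp (mul_inv_eq_one.mp h)
    · have h1 : braidGen n j = 1 := dif_neg (by omega)
      rw [h1]
      exact Commute.one_right _
  braid i hi hn := by
    rw [braidGen_eq_of n i ⟨hi, by omega⟩, braidGen_eq_of n (i + 1) ⟨by omega, by omega⟩]
    have h := PresentedGroup.one_of_mem (rels := braidRels n) (Or.inr
      ⟨⟨i - 1, by omega⟩, ⟨i + 1 - 1, by omega⟩, by simp only; omega, rfl⟩)
    rw [map_mul, map_inv, mul_inv_eq_one] at h
    simp only [map_mul] at h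
    exact h

end BraidFactor

/-- for odd `n ≥ 3`,
`((n-1 1)(n-2 2) ⋯ ((n+1)/2 (n-1)/2)) ⋅ ((n 1)(n-1 2) ⋯ ((n+3)/2 (n-1)/2)) = δ`. -/
theorem stmt_10 (n : ℕ) (hn : 3 ≤ n) (hodd : Odd n) :
    (((List.range ((n - 1) / 2)).map fun k => bandGen n (n - (k + 1)) (k + 1)).prod) *
      (((List.range ((n - 1) / 2)).map fun k => bandGen n (n - k) (k + 1)).prod) =
        braidDelta n := by
  obtain ⟨m, rfl⟩ := hodd
  have hm : (2 * m + 1 - 1) / 2 = m := by omega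
  have h1 : ((List.range m).map fun k =>
      bandGen (2 * m + 1) (2 * m + 1 - (k + 1)) (k + 1)).prod =
      BraidFactor.nest (braidGen (2 * m + 1)) 1 (2 * m + 0 - 1) := by
    rw [← BraidFactor.prod_eq_nest _ 1 m 0 (by omega)]
    congr 1
    refine List.map_congr_left fun k hk => ?_
    have := List.mem_range.mp hk
    rw [Nat.add_comm 1 k]
    exact BraidFactor.bandGen_eq _ _ _ _ (by omega)
  have h2 : ((List.range m).map fun k =>
      bandGen (2 * m + 1) (2 * m + 1 - k) (k + 1)).prod =
      BraidFactor.nest (braidGen (2 * m + 1)) 1 (2 * m + 1 - 1) := by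
    rw [← BraidFactor.prod_eq_nest _ 1 m 1 le_rfl]
    congr 1
    refine List.map_congr_left fun k hk => ?_
    have := List.mem_range.mp hk
    rw [Nat.add_comm 1 k]
    exact BraidFactor.bandGen_eq _ _ _ _ (by omega)
  have h3 : braidDelta (2 * m + 1) = BraidFactor.desc (braidGen (2 * m + 1)) 1 (2 * m) := by
    rw [← BraidFactor.prod_eq_desc, braidDelta, Nat.add_comm 1 (2 * m)]
    rfl
  have h4 := BraidFactor.nest_mul_nest (BraidFactor.isBraid_braidGen (2 * m + 1)) 1 (2 * m - 1)
    le_rfl (by omega)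
  rw [show 2 * m - 1 + 1 = 2 * m by omega] at h4
  rw [hm, h1, h2, h3]
  exact h4
end

section
/- Let n ≥ 3 be odd. For every integer k and every nonzero integer m, α_n^k ≠ ( (σ_1 σ_2 ⋯ σ_{n−1})^n )^m in the braid group B_n; that is, no power of α_n equals a nontrivial power of the full twist. -/
/-- The full twist `(σ_1 σ_2 ⋯ σ_{n-1})^n`. -/
def fullTwist (n : ℕ) : BraidGroup n :=
  (((List.range (n - 1)).map fun k => braidGen n (k + 1)).prod) ^ n

/-- The exponent-sum homomorphism `B_n → ℤ` (with `ℤ` written multiplicatively), sending every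
Artin generator to `1`. -/
def expSum (n : ℕ) : BraidGroup n →* Multiplicative ℤ :=
  PresentedGroup.toGroup (rels := braidRels n) (f := fun _ => Multiplicative.ofAdd 1) (by
    rintro r (⟨i, j, -, rfl⟩ | ⟨i, j, -, rfl⟩) <;> simp)

lemma expSum_braidGen (n i : ℕ) (h : 1 ≤ i ∧ i ≤ n - 1) :
    expSum n (braidGen n i) = Multiplicative.ofAdd 1 := by
  have hg : braidGen n i =
      (PresentedGroup.of ⟨i - 1, by omega⟩ : PresentedGroup (braidRels n)) := dif_pos h
  rw [hg]
  exact PresentedGroup.toGroup.of _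

lemma expSum_initial_prod (n l : ℕ) (hl : l ≤ n - 1) :
    expSum n ((List.range l).map fun k => braidGen n (k + 1)).prod =
      Multiplicative.ofAdd (l : ℤ) := by
  induction l with
  | zero => simp
  | succ l ih =>
    rw [List.prod_range_succ, map_mul, ih (by omega), expSum_braidGen n _ (by omega)]
    rw [← ofAdd_add]
    push_cast
    rfl

/-- Consecutive letters of `α_n` cancel in pairs in the exponent sum. -/
lemma expSum_alternating_initial_prod (n l : ℕ) (hl : 2 * l ≤ n - 1) :
    expSum n ((List.range (2 * l)).map fun k => braidGen n (k + 1) ^ ((-1 : ℤ) ^ k)).prod = 1 := by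
  induction l with
  | zero => simp
  | succ l ih =>
    rw [show 2 * (l + 1) = 2 * l + 1 + 1 by ring, List.prod_range_succ, List.prod_range_succ,
      map_mul, map_mul, ih (by omega), map_zpow, map_zpow, expSum_braidGen n _ (by omega),
      expSum_braidGen n _ (by omega)]
    simp [pow_succ, pow_mul]

/-- for odd `n ≥ 3`, no power of `α_n` equals a nontrivial power
of the full twist. -/
theorem stmt_13 (n : ℕ) (hn : 3 ≤ n) (hodd : Odd n) (k m : ℤ) (hm : m ≠ 0) :
    braidAlpha n ^ k ≠ fullTwist n ^ m := by
  intro h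
  obtain ⟨l, rfl⟩ := hodd
  have hα : expSum (2 * l + 1) (braidAlpha (2 * l + 1)) = 1 :=
    expSum_alternating_initial_prod (2 * l + 1) l (by omega)
  have h2 := congrArg (expSum (2 * l + 1)) h
  rw [map_zpow, map_zpow, hα, one_zpow, fullTwist, map_pow,
    expSum_initial_prod _ _ le_rfl, ← ofAdd_nsmul, ← ofAdd_zsmul, eq_comm, ofAdd_eq_one] at h2
  have hl : l ≠ 0 := by omega
  simp only [smul_eq_mul, nsmul_eq_mul, mul_eq_zero, Nat.cast_eq_zero] at h2
  omega
end

section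
/- Let n ≥ 3 be odd. For every nonzero integer k, the element α_n^k does not lie in the center of the braid group B_n; that is, the braid α_n is not periodic. -/
/-- The transvection `v ↦ v + s (v k + v (k + 2)) e_{k+1}` of `ℕ → ℤ`, as a bijection. -/
def transv (s : ℤ) (k : ℕ) : Equiv.Perm (ℕ → ℤ) where
  toFun v := fun j => if j = k + 1 then v j + s * (v k + v (k + 2)) else v j
  invFun v := fun j => if j = k + 1 then v j - s * (v k + v (k + 2)) else v j
  left_inv v := by
    funext j
    by_cases h : j = k + 1 <;> simp [h]
  right_inv v := by
    funext j
    by_cases h : j = k + 1 <;> simp [h]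

theorem transv_apply (s : ℤ) (k : ℕ) (v : ℕ → ℤ) (j : ℕ) :
    transv s k v j = if j = k + 1 then v j + s * (v k + v (k + 2)) else v j := rfl

theorem transv_inv (s : ℤ) (k : ℕ) : (transv s k)⁻¹ = transv (-s) k := by
  ext v j
  change (if j = k + 1 then v j - s * (v k + v (k + 2)) else v j) = _
  rw [transv_apply]
  split_ifs <;> ring

theorem transv_comm (s t : ℤ) (i j : ℕ) (h : i + 2 ≤ j) :
    transv s i * transv t j = transv t j * transv s i := by
  ext v l
  simp only [Equiv.Perm.mul_apply, transv_apply]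
  split_ifs <;> omega

/-- The braid relation holds because the off-diagonal pairings `s` and `-s` of the two
transvections have product `-s ^ 2 = -1`. -/
theorem transv_braid (s : ℤ) (hs : s * s = 1) (i : ℕ) :
    transv s i * transv (-s) (i + 1) * transv s i =
      transv (-s) (i + 1) * transv s i * transv (-s) (i + 1) := by
  ext v l
  have hi : ¬ i = i + 1 + 1 := by omega
  simp only [Equiv.Perm.mul_apply, transv_apply]
  by_cases h1 : l = i + 1
  · subst h1
    simp [hi]
    linear_combination (-(s * (v i + v (i + 2)))) * hs
  · by_cases h2 : l = i + 2
    · subst h2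
      simp [hi]
      linear_combination (-(s * (v (i + 1) + v (i + 3)))) * hs
    · simp [h1, h2]

/-- The integral symplectic (Burau at `t = -1`) representation of the braid group, with the
basis signs chosen so that `σ_{k+1} ^ (-1) ^ k` acts by the nonnegative transvection `transv 1 k`.
Coordinates `0` and those from `n` on are fixed. -/
def burau (n : ℕ) : BraidGroup n →* Equiv.Perm (ℕ → ℤ) :=
  PresentedGroup.toGroup (rels := braidRels n)
    (f := fun i : Fin (n - 1) => transv ((-1) ^ (i : ℕ)) i) (by
      rintro r (⟨i, j, hij, rfl⟩ | ⟨i, j, hij, rfl⟩)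
      · simp only [map_mul, map_inv, FreeGroup.lift_apply_of]
        rw [transv_comm _ _ _ _ hij]
        group
      · simp only [map_mul, map_inv, FreeGroup.lift_apply_of]
        rw [mul_inv_eq_one, hij, pow_succ, mul_neg_one]
        exact transv_braid _ (by rw [← mul_pow]; simp) _)

theorem burau_braidGen (n k : ℕ) (hk : k < n - 1) :
    burau n (braidGen n (k + 1)) = transv ((-1) ^ k) k := by
  have h : 1 ≤ k + 1 ∧ k + 1 ≤ n - 1 := by omega
  have hgen : braidGen n (k + 1) = PresentedGroup.of ⟨k, hk⟩ := dif_pos h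
  rw [hgen]
  exact PresentedGroup.toGroup.of _

theorem burau_letter (n k : ℕ) (hk : k < n - 1) :
    burau n (braidGen n (k + 1) ^ ((-1 : ℤ) ^ k)) = transv 1 k := by
  rw [map_zpow, burau_braidGen n k hk]
  rcases Nat.even_or_odd k with h | h
  · simp [h.neg_one_pow]
  · simp [h.neg_one_pow, transv_inv]

/-- A bijection of `ℕ → ℤ` is expanding if it does not decrease any coordinate of a
nonnegative vector. -/
def Expanding (g : Equiv.Perm (ℕ → ℤ)) : Prop := ∀ v, 0 ≤ v → v ≤ g v

theorem Expanding.one : Expanding 1 := fun _ _ => le_rfl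

theorem Expanding.mul {g h : Equiv.Perm (ℕ → ℤ)} (hg : Expanding g) (hh : Expanding h) :
    Expanding (g * h) := fun v hv =>
  (hh v hv).trans (hg (h v) (hv.trans (hh v hv)))

theorem Expanding.pow {g : Equiv.Perm (ℕ → ℤ)} (hg : Expanding g) (m : ℕ) :
    Expanding (g ^ m) := by
  induction m with
  | zero => exact Expanding.one
  | succ m ih => rw [pow_succ]; exact ih.mul hg

theorem Expanding.list_prod (L : List (Equiv.Perm (ℕ → ℤ))) (h : ∀ g ∈ L, Expanding g) :
    Expanding L.prod := by
  induction L with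
  | nil => exact Expanding.one
  | cons a L ih =>
    rw [List.prod_cons]
    exact (h a (by simp)).mul (ih fun g hg => h g (by simp [hg]))

theorem expanding_transv (k : ℕ) : Expanding (transv 1 k) := by
  intro v hv j
  rw [transv_apply]
  have h1 : 0 ≤ v k := hv k
  have h2 : 0 ≤ v (k + 2) := hv (k + 2)
  split_ifs <;> linarith

theorem burau_braidAlpha (n : ℕ) :
    burau n (braidAlpha n) = ((List.range (n - 1)).map (transv 1)).prod := by
  unfold braidAlpha
  rw [map_list_prod, List.map_map]
  congr 1
  apply List.map_congr_left
  intro k hk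
  exact burau_letter n k (List.mem_range.mp hk)

theorem expanding_alpha (n : ℕ) : Expanding (burau n (braidAlpha n)) := by
  rw [burau_braidAlpha]
  apply Expanding.list_prod
  intro g hg
  obtain ⟨k, -, rfl⟩ := List.mem_map.mp hg
  exact expanding_transv k

/-- The action of `α_n` spreads coordinate `1` to coordinate `2`. -/
theorem alpha_spread (n : ℕ) (hn : 3 ≤ n) (v : ℕ → ℤ) (hv : 0 ≤ v) :
    v 1 ≤ burau n (braidAlpha n) v 2 := by
  obtain ⟨m, rfl⟩ : ∃ m, n = m + 3 := ⟨n - 3, by omega⟩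
  rw [burau_braidAlpha, show m + 3 - 1 = m + 1 + 1 by omega, List.range_succ_eq_map,
    List.range_succ_eq_map]
  simp only [List.map_cons, List.prod_cons, List.map_map]
  set R : Equiv.Perm (ℕ → ℤ) := List.prod _ with hR
  have hexp : Expanding R := by
    apply Expanding.list_prod
    intro g hg
    obtain ⟨k, -, rfl⟩ := List.mem_map.mp hg
    exact expanding_transv _
  have hle := hexp v hv
  have h1 : v 1 ≤ R v 1 := hle 1
  have h2 : 0 ≤ R v 2 := (hv 2).trans (hle 2)
  have h3 : 0 ≤ R v 3 := (hv 3).trans (hle 3)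
  simp only [Equiv.Perm.mul_apply, transv_apply]
  simp
  linarith

theorem alpha_pow_not_central (n : ℕ) (hn : 3 ≤ n) (m : ℕ) (hm : m ≠ 0) :
    braidAlpha n ^ m ∉ Subgroup.center (BraidGroup n) := by
  intro hc
  obtain ⟨m, rfl⟩ := Nat.exists_eq_succ_of_ne_zero hm
  set A := burau n (braidAlpha n) with hA
  have hcomm : transv 1 0 * A ^ (m + 1) = A ^ (m + 1) * transv 1 0 := by
    have h := congrArg (burau n) (Subgroup.mem_center_iff.mp hc (braidGen n 1))
    rw [map_mul, map_mul, map_pow, burau_braidGen n 0 (by omega)] at h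
    simpa using h
  set v : ℕ → ℤ := Pi.single 1 1 with hv
  have hv0 : 0 ≤ v := by rw [hv]; exact Pi.single_nonneg.mpr zero_le_one
  have hfix : transv 1 0 v = v := by
    funext j
    rw [transv_apply]
    simp [hv]
  have hw : transv 1 0 ((A ^ (m + 1)) v) = (A ^ (m + 1)) v := by
    have h := congrArg (fun g : Equiv.Perm (ℕ → ℤ) => g v) hcomm
    simpa only [Equiv.Perm.mul_apply, hfix] using h
  have hsum : (A ^ (m + 1)) v 0 + (A ^ (m + 1)) v 2 = 0 := by
    have h := congrFun hw 1
    rw [transv_apply] at h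
    simpa using h
  have hexp : Expanding A := expanding_alpha n
  have h0 : 0 ≤ (A ^ (m + 1)) v 0 := (hv0 0).trans (hexp.pow (m + 1) v hv0 0)
  have h2 : 1 ≤ (A ^ (m + 1)) v 2 := by
    have hAv : 1 ≤ A v 2 := by simpa [hv] using alpha_spread n hn v hv0
    rw [pow_succ, Equiv.Perm.mul_apply]
    exact hAv.trans (hexp.pow m (A v) (hv0.trans (hexp v hv0)) 2)
  linarith

/-- for odd `n ≥ 3`, no nonzero power of `α_n` is central in `B_n`,
i.e. `α_n` is not periodic. -/
theorem stmt_14 (n : ℕ) (hn : 3 ≤ n) (hodd : Odd n) (k : ℤ) (hk : k ≠ 0) :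
    braidAlpha n ^ k ∉ Subgroup.center (BraidGroup n) := by
  intro hc
  refine alpha_pow_not_central n hn k.natAbs (Int.natAbs_ne_zero.mpr hk) ?_
  rcases Int.natAbs_eq k with h | h
  · rw [h, zpow_natCast] at hc
    exact hc
  · rw [h, zpow_neg, zpow_natCast] at hc
    exact inv_mem_iff.mp hc
end
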